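/- arXiv:math/9910160 — 8 statements merged into one kernel-verified Lean document; each statement's English description precedes it below -/
import Mathlib

section
/- Let n ≥ 1 and let K be a nonempty closed bounded convex subset of ℝⁿ. Then for every continuous function f : K → ℝ with ω₂(f;K) ≤ 1 there exists an affine function φ(x) = c + ⟨a,x⟩ on ℝⁿ such that |f(x) − φ(x)| ≤ (1/2)⌊log₂ n⌋ + 5/4 for all x ∈ K. (Upper bound of Theorem 3.1: w₂(n) ≤ (1/2)⌊log₂ n⌋ + 5/4.) -/
open Finset

/-- `diffBound m K f c` says that the `m`-th modulus of smoothness of `f` on `K` is at most `c`,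
i.e. `|Δ_h^m f(x)| ≤ c` whenever `x, x+h, …, x+mh ∈ K`. -/
def diffBound {E : Type*} [AddCommGroup E] [Module ℝ E] (m : ℕ) (K : Set E) (f : E → ℝ)
    (c : ℝ) : Prop :=
  ∀ x h : E, (∀ j : ℕ, j ≤ m → x + (j : ℝ) • h ∈ K) →
    |∑ j ∈ Finset.range (m + 1), (-1 : ℝ) ^ (m - j) * (m.choose j : ℝ) * f (x + (j : ℝ) • h)| ≤ c

/-- Logarithmic estimate used in the halving step. -/
lemma logb_halves (a b : ℕ) (ha : 1 ≤ a) (hb : 1 ≤ b) :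
    Real.logb 2 a + Real.logb 2 b ≤ 2 * Real.logb 2 ((a + b : ℕ) : ℝ) - 2 := by
  have ha' : (0 : ℝ) < a := by exact_mod_cast ha
  have hb' : (0 : ℝ) < b := by exact_mod_cast hb
  have h4 : Real.logb 2 4 = 2 := by
    rw [show (4 : ℝ) = 2 ^ (2 : ℕ) by norm_num, Real.logb_pow, Real.logb_self_eq_one] <;> norm_num
  have h1 : Real.logb 2 (4 * ((a : ℝ) * b)) ≤ Real.logb 2 (((a + b : ℕ) : ℝ) ^ 2) := by
    apply Real.logb_le_logb_of_le (by norm_num) (by positivity)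
    push_cast
    nlinarith [sq_nonneg ((a : ℝ) - b)]
  rw [Real.logb_mul (by norm_num) (by positivity), Real.logb_mul ha'.ne' hb'.ne',
    Real.logb_pow, h4] at h1
  push_cast at h1 ⊢
  linarith

lemma logb_nat_nonneg (a : ℕ) : 0 ≤ Real.logb 2 (a : ℝ) := by
  rcases Nat.eq_zero_or_pos a with h | h
  · simp [h]
  · exact Real.logb_nonneg (by norm_num) (by exact_mod_cast h)

lemma sum_three {ι M : Type*} [DecidableEq ι] [AddCommMonoid M] {s t r : Finset ι} {i : ι}
    (hts : t ⊆ s) (hir : i ∉ r) (hsr : s \ t = insert i r) (g : ι → M) :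
    ∑ j ∈ s, g j = ∑ j ∈ t, g j + (g i + ∑ j ∈ r, g j) := by
  rw [← Finset.sum_sdiff hts, hsr, Finset.sum_insert hir, add_comm]

/-- Approximate Jensen inequality with an error term `B / 2 ^ m`. -/
lemma jensen_aux {E ι : Type*} [AddCommGroup E] [Module ℝ E] [DecidableEq ι] (K : Set E)
    (hK : Convex ℝ K) (f : E → ℝ)
    (hmid : ∀ x ∈ K, ∀ y ∈ K, f ((1 / 2 : ℝ) • x + (1 / 2 : ℝ) • y) ≤ (f x + f y) / 2 + 1 / 2)
    (B : ℝ) (hB : ∀ x ∈ K, |f x| ≤ B) (z : ι → E) (hz : ∀ i, z i ∈ K) :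
    ∀ (N m : ℕ) (s : Finset ι) (w : ι → ℝ), s.card = N → (∀ i ∈ s, 0 ≤ w i) →
      ∑ i ∈ s, w i = 1 →
      f (∑ i ∈ s, w i • z i) ≤ ∑ i ∈ s, w i * f (z i)
        + (1 + 1 / 2 * Real.logb 2 ((N - 1 : ℕ) : ℝ)) + 2 * B / 2 ^ m := by
  intro N
  induction N using Nat.strong_induction_on with
  | _ N ihN =>
  intro m
  induction m with
  | zero =>
    intro s w hs hw hsum
    have h1 := hB _ (hK.sum_mem hw hsum (fun i _ => hz i))
    have h2 : ∑ i ∈ s, w i * (-B) ≤ ∑ i ∈ s, w i * f (z i) :=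
      Finset.sum_le_sum fun i hi =>
        mul_le_mul_of_nonneg_left (abs_le.1 (hB _ (hz i))).1 (hw i hi)
    rw [← Finset.sum_mul, hsum] at h2
    have h3 := logb_nat_nonneg (N - 1)
    have := (abs_le.1 h1).2
    simp only [pow_zero, div_one]
    linarith
  | succ m ih =>
    intro s w hs hw hsum
    have hlog := logb_nat_nonneg (N - 1)
    by_cases hbig : ∃ i ∈ s, 1 / 2 ≤ w i
    · obtain ⟨i, hi, hwi⟩ := hbig
      let w' : ι → ℝ := fun j => if j = i then 2 * w i - 1 else 2 * w j
      have hsplit : ∀ j, w j = 1 / 2 * (if j = i then 1 else 0) + 1 / 2 * w' j := by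
        intro j
        by_cases h : j = i
        · subst h; simp [w']; ring
        · simp [w', h]
      have hw' : ∀ j ∈ s, 0 ≤ w' j := by
        intro j hj
        by_cases h : j = i
        · simp [w', h]; linarith
        · simp [w', h]; exact hw j hj
      have hs' : ∑ j ∈ s, w' j = 1 := by
        have h : ∑ j ∈ s, w j = ∑ j ∈ s, (1 / 2 * (if j = i then (1 : ℝ) else 0) + 1 / 2 * w' j) :=
          Finset.sum_congr rfl fun j _ => hsplit j
        rw [Finset.sum_add_distrib, ← Finset.mul_sum, ← Finset.mul_sum, hsum] at h
        simp [hi] at h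
        linarith
      have hp : ∑ j ∈ s, w j • z j = (1 / 2 : ℝ) • z i + (1 / 2 : ℝ) • ∑ j ∈ s, w' j • z j := by
        have h : ∑ j ∈ s, w j • z j = ∑ j ∈ s, ((1 / 2 : ℝ) • ((if j = i then (1 : ℝ) else 0) • z j)
            + (1 / 2 : ℝ) • (w' j • z j)) :=
          Finset.sum_congr rfl fun j _ => by rw [hsplit j, add_smul, mul_smul, mul_smul]
        rw [h, Finset.sum_add_distrib, ← Finset.smul_sum, ← Finset.smul_sum]
        simp [hi]
      have hq : ∑ j ∈ s, w j * f (z j) = 1 / 2 * f (z i) + 1 / 2 * ∑ j ∈ s, w' j * f (z j) := by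
        have h : ∑ j ∈ s, w j * f (z j) =
            ∑ j ∈ s, ((1 / 2 : ℝ) * ((if j = i then (1 : ℝ) else 0) * f (z j))
            + (1 / 2 : ℝ) * (w' j * f (z j))) :=
          Finset.sum_congr rfl fun j _ => by rw [hsplit j]; ring
        rw [h, Finset.sum_add_distrib, ← Finset.mul_sum, ← Finset.mul_sum]
        simp [hi]
      have h1 := hmid _ (hz i) _ (hK.sum_mem hw' hs' (fun i _ => hz i))
      have h2 := ih s w' hs hw' hs'
      rw [hp, hq]
      have h3 : 2 * B / 2 ^ (m + 1) = 1 / 2 * (2 * B / 2 ^ m) := by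
        rw [pow_succ]; field_simp
      rw [h3]
      linarith
    · push Not at hbig
      -- choose a maximal subset of weight at most one half
      obtain ⟨t, ht, htmax⟩ := Finset.exists_max_image
        (s.powerset.filter fun t => ∑ i ∈ t, w i ≤ 1 / 2) Finset.card
        ⟨∅, by simp⟩
      rw [Finset.mem_filter, Finset.mem_powerset] at ht
      obtain ⟨hts, htw⟩ := ht
      have hne : (s \ t).Nonempty := by
        rw [Finset.sdiff_nonempty]
        intro h
        have : s = t := Finset.Subset.antisymm h hts
        rw [← this, hsum] at htw
        norm_num at htw
      obtain ⟨i, hi⟩ := hne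
      obtain ⟨his, hit⟩ := Finset.mem_sdiff.1 hi
      have hiw : 1 / 2 < ∑ j ∈ t, w j + w i := by
        by_contra hcon
        push Not at hcon
        have := htmax (insert i t) (by
          rw [Finset.mem_filter, Finset.mem_powerset]
          refine ⟨Finset.insert_subset his hts, ?_⟩
          rw [Finset.sum_insert hit]; linarith)
        rw [Finset.card_insert_of_notMem hit] at this
        omega
      let r := (s \ t).erase i
      have hir : i ∉ r := by simp [r]
      have hsr : s \ t = insert i r := (Finset.insert_erase hi).symm
      have hdec := @sum_three ι ℝ _ _ s t r i hts hir hsr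
      have hdecE := @sum_three ι E _ _ s t r i hts hir hsr
      have hcard : s.card = t.card + (1 + r.card) := by
        rw [← Finset.card_sdiff_add_card_eq_card hts, hsr, Finset.card_insert_of_notMem hir]
        omega
      have hwi := hbig i his
      have hrs : ∀ j ∈ r, j ∈ s := fun j hj =>
        (Finset.mem_sdiff.1 (Finset.mem_of_mem_erase hj)).1
      have hsum3 := hdec w
      rw [hsum] at hsum3
      have ht1 : 1 ≤ t.card := by
        rw [Nat.one_le_iff_ne_zero, Ne, Finset.card_eq_zero]
        intro h
        rw [h, Finset.sum_empty] at hiw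
        linarith
      have hr1 : 1 ≤ r.card := by
        rw [Nat.one_le_iff_ne_zero, Ne, Finset.card_eq_zero]
        intro h
        rw [h, Finset.sum_empty] at hsum3
        linarith
      let T := ∑ j ∈ t, w j
      let w₁ : ι → ℝ := fun j => if j = i then 1 - 2 * T else 2 * w j
      let w₂ : ι → ℝ := fun j => if j = i then 2 * (T + w i) - 1 else 2 * w j
      have hnt : ∀ j ∈ t, j ≠ i := fun j hj h => hit (h ▸ hj)
      have hnr : ∀ j ∈ r, j ≠ i := fun j hj h => hir (h ▸ hj)
      have e1 : ∀ j ∈ t, w₁ j = 2 * w j := fun j hj => by simp [w₁, hnt j hj]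
      have e2 : ∀ j ∈ r, w₂ j = 2 * w j := fun j hj => by simp [w₂, hnr j hj]
      have e1i : w₁ i = 1 - 2 * T := by simp [w₁]
      have e2i : w₂ i = 2 * (T + w i) - 1 := by simp [w₂]
      have hw₁ : ∀ j ∈ insert i t, 0 ≤ w₁ j := by
        intro j hj
        rcases Finset.mem_insert.1 hj with rfl | hj
        · rw [e1i]; simp only [T]; linarith
        · rw [e1 j hj]; linarith [hw j (hts hj)]
      have hw₂ : ∀ j ∈ insert i r, 0 ≤ w₂ j := by
        intro j hj
        rcases Finset.mem_insert.1 hj with rfl | hj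
        · rw [e2i]; simp only [T]; linarith
        · rw [e2 j hj]; linarith [hw j (hrs j hj)]
      have hs₁ : ∑ j ∈ insert i t, w₁ j = 1 := by
        rw [Finset.sum_insert hit, e1i, Finset.sum_congr rfl e1, ← Finset.mul_sum]
        simp only [T]; ring
      have hs₂ : ∑ j ∈ insert i r, w₂ j = 1 := by
        rw [Finset.sum_insert hir, e2i, Finset.sum_congr rfl e2, ← Finset.mul_sum]
        simp only [T]; linarith
      have hp : ∑ j ∈ s, w j • z j = (1 / 2 : ℝ) • (∑ j ∈ insert i t, w₁ j • z j)
          + (1 / 2 : ℝ) • ∑ j ∈ insert i r, w₂ j • z j := by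
        have g1 : ∑ j ∈ t, w₁ j • z j = ∑ j ∈ t, (2 * w j) • z j :=
          Finset.sum_congr rfl fun j hj => by rw [e1 j hj]
        have g2 : ∑ j ∈ r, w₂ j • z j = ∑ j ∈ r, (2 * w j) • z j :=
          Finset.sum_congr rfl fun j hj => by rw [e2 j hj]
        rw [hdecE, Finset.sum_insert hit, Finset.sum_insert hir, e1i, e2i, g1, g2]
        simp only [mul_smul, ← Finset.smul_sum]
        module
      have hq : ∑ j ∈ s, w j * f (z j) = (1 / 2 : ℝ) * (∑ j ∈ insert i t, w₁ j * f (z j))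
          + (1 / 2 : ℝ) * ∑ j ∈ insert i r, w₂ j * f (z j) := by
        have g1 : ∑ j ∈ t, w₁ j * f (z j) = ∑ j ∈ t, (2 * w j) * f (z j) :=
          Finset.sum_congr rfl fun j hj => by rw [e1 j hj]
        have g2 : ∑ j ∈ r, w₂ j * f (z j) = ∑ j ∈ r, (2 * w j) * f (z j) :=
          Finset.sum_congr rfl fun j hj => by rw [e2 j hj]
        rw [hdec, Finset.sum_insert hit, Finset.sum_insert hir, e1i, e2i, g1, g2]
        simp only [mul_assoc, ← Finset.mul_sum]
        ring
      have c1 : (insert i t).card = t.card + 1 := Finset.card_insert_of_notMem hit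
      have c2 : (insert i r).card = r.card + 1 := Finset.card_insert_of_notMem hir
      have h1 := hmid _ (hK.sum_mem hw₁ hs₁ (fun i _ => hz i)) _
        (hK.sum_mem hw₂ hs₂ (fun i _ => hz i))
      have h2 := ihN (t.card + 1) (by omega) (m + 1) _ w₁ c1 hw₁ hs₁
      have h3 := ihN (r.card + 1) (by omega) (m + 1) _ w₂ c2 hw₂ hs₂
      have h4 := logb_halves t.card r.card ht1 hr1
      rw [show t.card + r.card = N - 1 by omega] at h4
      rw [Nat.add_sub_cancel] at h2 h3
      rw [hp, hq]
      linarith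

/-- Approximate Jensen inequality. -/
lemma jensen_approx {E ι : Type*} [AddCommGroup E] [Module ℝ E] (K : Set E)
    (hK : Convex ℝ K) (f : E → ℝ)
    (hmid : ∀ x ∈ K, ∀ y ∈ K, f ((1 / 2 : ℝ) • x + (1 / 2 : ℝ) • y) ≤ (f x + f y) / 2 + 1 / 2)
    (B : ℝ) (hB : ∀ x ∈ K, |f x| ≤ B) (z : ι → E) (hz : ∀ i, z i ∈ K)
    (s : Finset ι) (w : ι → ℝ) (hw : ∀ i ∈ s, 0 ≤ w i) (hsum : ∑ i ∈ s, w i = 1) :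
    f (∑ i ∈ s, w i • z i) ≤ ∑ i ∈ s, w i * f (z i)
        + (1 + 1 / 2 * Real.logb 2 ((s.card - 1 : ℕ) : ℝ)) := by
  classical
  have h := fun m => jensen_aux K hK f hmid B hB z hz s.card m s w rfl hw hsum
  have hlim : Filter.Tendsto (fun m : ℕ => ∑ i ∈ s, w i * f (z i)
        + (1 + 1 / 2 * Real.logb 2 ((s.card - 1 : ℕ) : ℝ)) + 2 * B / 2 ^ m) Filter.atTop
      (nhds (∑ i ∈ s, w i * f (z i)
        + (1 + 1 / 2 * Real.logb 2 ((s.card - 1 : ℕ) : ℝ)) + 0)) := by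
    apply Filter.Tendsto.const_add
    exact tendsto_const_nhds.div_atTop (tendsto_pow_atTop_atTop_of_one_lt (by norm_num))
  rw [add_zero] at hlim
  exact ge_of_tendsto' hlim h

/-- The numerical estimate: `S_a + S_b ≤ ⌊log₂ n⌋ + 2` for `a + b ≤ n`. -/
lemma log_total (n a b : ℕ) (hn : 1 ≤ n) (hab : a + b ≤ n) :
    (1 + 1 / 2 * Real.logb 2 (a : ℝ)) + (1 + 1 / 2 * Real.logb 2 (b : ℝ))
      ≤ (Nat.log 2 n : ℝ) + 2 := by
  have hn' : (1 : ℝ) ≤ n := by exact_mod_cast hn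
  have hL : Real.logb 2 (n : ℝ) ≤ (Nat.log 2 n : ℝ) + 1 := by
    rw [Real.logb_le_iff_le_rpow (by norm_num) (by linarith)]
    have := (Nat.lt_pow_succ_log_self (b := 2) (by norm_num) n).le
    have h2 : ((n : ℕ) : ℝ) ≤ ((2 ^ (Nat.log 2 n).succ : ℕ) : ℝ) := by exact_mod_cast this
    rw [show (Nat.log 2 n : ℝ) + 1 = ((Nat.log 2 n + 1 : ℕ) : ℝ) by push_cast; ring,
      Real.rpow_natCast]
    simpa using h2
  have hmono : ∀ c : ℕ, c ≤ n → Real.logb 2 (c : ℝ) ≤ Real.logb 2 (n : ℝ) := by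
    intro c hc
    rcases Nat.eq_zero_or_pos c with h | h
    · simpa [h] using logb_nat_nonneg n
    · exact Real.logb_le_logb_of_le (by norm_num) (by exact_mod_cast h) (by exact_mod_cast hc)
  have hhalf : 1 / 2 * Real.logb 2 (n : ℝ) ≤ (Nat.log 2 n : ℝ) := by
    rcases Nat.eq_or_lt_of_le hn with h | h
    · simp [← h]
    · have : 1 ≤ Nat.log 2 n := Nat.log_pos (by norm_num) h
      have : (1 : ℝ) ≤ Nat.log 2 n := by exact_mod_cast this
      linarith
  rcases Nat.eq_zero_or_pos a with ha | ha
  · have := hmono b (by omega)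
    simp only [ha, Nat.cast_zero, Real.logb_zero]
    linarith
  rcases Nat.eq_zero_or_pos b with hb | hb
  · have := hmono a (by omega)
    simp only [hb, Nat.cast_zero, Real.logb_zero]
    linarith
  have h1 := logb_halves a b ha hb
  have h2 := hmono (a + b) hab
  linarith

/-- The convex hull of a compact set in a finite-dimensional space is compact. -/
lemma compact_hull {E : Type*} [NormedAddCommGroup E] [NormedSpace ℝ E] [FiniteDimensional ℝ E]
    (s : Set E) (hs : IsCompact s) (hne : s.Nonempty) : IsCompact (convexHull ℝ s) := by
  obtain ⟨x0, hx0⟩ := hne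
  let d := Module.finrank ℝ E + 1
  let F : (Fin d → ℝ) × (Fin d → E) → E := fun p => ∑ i, p.1 i • p.2 i
  have hF : Continuous F := by fun_prop
  have hc : IsCompact ((stdSimplex ℝ (Fin d)) ×ˢ (Set.univ.pi fun _ : Fin d => s)) :=
    (isCompact_stdSimplex ℝ (Fin d)).prod (isCompact_univ_pi fun _ => hs)
  have : convexHull ℝ s = F '' ((stdSimplex ℝ (Fin d)) ×ˢ (Set.univ.pi fun _ : Fin d => s)) := by
    apply Set.Subset.antisymm
    · intro x hx
      obtain ⟨ι, hι, z, w, hzs, hind, hw, hw1, hx⟩ := eq_pos_convex_span_of_mem_convexHull hx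
      have hcard : Fintype.card ι ≤ Fintype.card (Fin d) := by
        rw [Fintype.card_fin]
        exact hind.card_le_finrank_succ.trans
          (Nat.add_le_add_right (Submodule.finrank_le _) 1)
      obtain ⟨e⟩ := Function.Embedding.nonempty_of_card_le hcard
      have hout : ∀ j, j ∉ Set.range e → Function.extend e w 0 j = 0 := by
        intro j hj
        rw [Function.extend_apply' _ _ _ (by simpa using hj)]; rfl
      refine ⟨(Function.extend e w 0, Function.extend e z (fun _ => x0)), ⟨⟨?_, ?_⟩, ?_⟩, ?_⟩
      · intro j
        by_cases hj : j ∈ Set.range e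
        · obtain ⟨i, rfl⟩ := hj
          simpa [e.injective.extend_apply] using (hw i).le
        · exact (hout j hj).ge
      · rw [← hw1]
        symm
        apply Fintype.sum_of_injective e e.injective
        · exact hout
        · intro i; simp [e.injective.extend_apply]
      · intro j _
        by_cases hj : j ∈ Set.range e
        · obtain ⟨i, rfl⟩ := hj
          simpa [e.injective.extend_apply] using hzs ⟨i, rfl⟩
        · simp only
          rw [Function.extend_apply' _ _ _ (by simpa using hj)]; exact hx0
      · rw [← hx]
        symm
        apply Fintype.sum_of_injective e e.injective
        · intro j hj
          simp only
          rw [hout j hj, zero_smul]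
        · intro i; simp [e.injective.extend_apply]
    · rintro _ ⟨⟨w, z⟩, ⟨hw, hz⟩, rfl⟩
      exact (convex_convexHull ℝ s).sum_mem (fun i _ => hw.1 i) hw.2
        (fun i _ => subset_convexHull ℝ s (hz i trivial))
  rw [this]
  exact hc.image hF

/-- Key duality bound: finitely supported signed measures annihilating affine functions. -/
lemma dual_bound (n : ℕ) (hn : 1 ≤ n) (K : Set (Fin n → ℝ)) (hK : Convex ℝ K)
    (f : (Fin n → ℝ) → ℝ)
    (hmid : ∀ x ∈ K, ∀ y ∈ K, f ((1 / 2 : ℝ) • x + (1 / 2 : ℝ) • y) ≤ (f x + f y) / 2 + 1 / 2)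
    (hmid' : ∀ x ∈ K, ∀ y ∈ K, (f x + f y) / 2 - 1 / 2 ≤ f ((1 / 2 : ℝ) • x + (1 / 2 : ℝ) • y))
    (B : ℝ) (hB : ∀ x ∈ K, |f x| ≤ B) {ι : Type*} [DecidableEq ι]
    (z : ι → Fin n → ℝ) (hz : ∀ i, z i ∈ K) :
    ∀ (N : ℕ) (s : Finset ι) (α : ι → ℝ), s.card = N → ∑ i ∈ s, α i = 0 →
      ∑ i ∈ s, α i • z i = 0 →
      ∑ i ∈ s, α i * f (z i) ≤ ((Nat.log 2 n : ℝ) + 2) / 2 * ∑ i ∈ s, |α i| := by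
  intro N
  induction N with
  | zero =>
    intro s α hs _ _
    rw [Finset.card_eq_zero] at hs
    simp [hs]
  | succ N ih =>
  intro s α hs h0 h1
  -- if one of the coefficients vanishes we may drop it
  have key : ∀ γ : ι → ℝ, (∃ i ∈ s, γ i = 0) → ∑ i ∈ s, γ i = 0 → ∑ i ∈ s, γ i • z i = 0 →
      ∑ i ∈ s, γ i * f (z i) ≤ ((Nat.log 2 n : ℝ) + 2) / 2 * ∑ i ∈ s, |γ i| := by
    rintro γ ⟨i, hi, hγ⟩ g0 g1
    have hc : (s.erase i).card = N := by rw [Finset.card_erase_of_mem hi]; omega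
    rw [← Finset.add_sum_erase s _ hi] at g0 g1 ⊢
    rw [← Finset.add_sum_erase s (fun i => |γ i|) hi]
    simp only [hγ, zero_smul, zero_mul, zero_add, abs_zero] at g0 g1 ⊢
    exact ih _ γ hc g0 g1
  by_cases hzero : ∃ i ∈ s, α i = 0
  · exact key α hzero h0 h1
  push Not at hzero
  by_cases hcard : n + 2 < s.card
  · -- reduction of the support
    let σ : ι → ℝ := fun i => if 0 < α i then 1 else -1
    have hσ : ∀ i, α i * σ i = |α i| := by
      intro i
      by_cases h : 0 < α i
      · simp [σ, h, abs_of_pos h]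
      · simp [σ, h, abs_of_nonpos (not_lt.1 h)]
    have hσ1 : ∀ i, |σ i| = 1 := by
      intro i
      by_cases h : 0 < α i <;> simp [σ, h]
    have hσσ : ∀ i, σ i * σ i = 1 := by
      intro i
      by_cases h : 0 < α i <;> simp [σ, h]
    have hβ : ∃ β : ι → ℝ, ∑ i ∈ s, β i = 0 ∧ ∑ i ∈ s, β i * σ i = 0 ∧
        ∑ i ∈ s, β i • z i = 0 ∧ ∃ i ∈ s, β i ≠ 0 := by
      let v : s → ℝ × ℝ × (Fin n → ℝ) := fun i => (1, σ i, z i)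
      have hv : ¬ LinearIndependent ℝ v := by
        intro h
        have := h.fintype_card_le_finrank
        simp at this
        omega
      obtain ⟨g, hg, i, hi⟩ := Fintype.not_linearIndependent_iff.1 hv
      refine ⟨fun i => if h : i ∈ s then g ⟨i, h⟩ else 0, ?_, ?_, ?_, i, i.2, by simpa using hi⟩
      · have := congrArg Prod.fst hg
        rw [Prod.fst_sum] at this
        rw [← Finset.sum_coe_sort]
        simpa [v] using this
      · have := congrArg (fun p => p.2.1) hg
        simp only [Prod.snd_sum, Prod.fst_sum] at this
        rw [← Finset.sum_coe_sort]
        simpa [v] using this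
      · have := congrArg (fun p => p.2.2) hg
        simp only [Prod.snd_sum] at this
        rw [← Finset.sum_coe_sort]
        simpa [v] using this
    have hβ' : ∃ β : ι → ℝ, ∑ i ∈ s, β i = 0 ∧ ∑ i ∈ s, β i * σ i = 0 ∧
        ∑ i ∈ s, β i • z i = 0 ∧ (∃ i ∈ s, β i ≠ 0) ∧ 0 ≤ ∑ i ∈ s, β i * f (z i) := by
      obtain ⟨β, b1, b2, b3, i, hi, hβi⟩ := hβ
      rcases le_total 0 (∑ i ∈ s, β i * f (z i)) with h | h
      · exact ⟨β, b1, b2, b3, ⟨i, hi, hβi⟩, h⟩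
      · refine ⟨fun i => -β i, ?_, ?_, ?_, ⟨i, hi, by simpa using hβi⟩, ?_⟩
        · simp [b1]
        · simp [b2]
        · simp [b3]
        · simpa using h
    obtain ⟨β, b1, b2, b3, ⟨i0, hi0, hβ0⟩, b4⟩ := hβ'
    have hneg : (s.filter fun i => β i * σ i < 0).Nonempty := by
      by_contra hcon
      rw [Finset.not_nonempty_iff_eq_empty, Finset.filter_eq_empty_iff] at hcon
      have hall := (Finset.sum_eq_zero_iff_of_nonneg fun i hi => not_lt.1 (hcon hi)).1 b2 i0 hi0
      have : σ i0 ≠ 0 := fun h => by have := hσσ i0; simp [h] at this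
      exact (mul_ne_zero hβ0 this) hall
    obtain ⟨k, hk, hkmin⟩ := Finset.exists_min_image _
      (fun i => |α i| / (-(β i * σ i))) hneg
    rw [Finset.mem_filter] at hk
    let t := |α k| / (-(β k * σ k))
    have ht : 0 ≤ t := div_nonneg (abs_nonneg _) (by linarith [hk.2])
    let γ : ι → ℝ := fun i => α i + t * β i
    have hγσ : ∀ i ∈ s, 0 ≤ γ i * σ i := by
      intro i hi
      have e : γ i * σ i = |α i| + t * (β i * σ i) := by
        rw [← hσ i]; simp only [γ]; ring
      rw [e]
      by_cases h : β i * σ i < 0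
      · have h2 := hkmin i (Finset.mem_filter.2 ⟨hi, h⟩)
        rw [le_div_iff₀ (by linarith)] at h2
        simp only [t]
        linarith
      · have := mul_nonneg ht (not_lt.1 h)
        linarith [abs_nonneg (α i)]
    have hγk : γ k = 0 := by
      have e : γ k * σ k = |α k| + t * (β k * σ k) := by
        rw [← hσ k]; simp only [γ]; ring
      have e2 : t * (β k * σ k) = -|α k| := by
        simp only [t]
        have := hk.2.ne
        rw [div_neg, neg_mul, div_mul_cancel₀ _ this]
      have e3 : γ k * σ k = 0 := by rw [e, e2]; ring
      calc γ k = γ k * σ k * σ k := by rw [mul_assoc, hσσ, mul_one]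
        _ = 0 := by rw [e3, zero_mul]
    have habs : ∀ i ∈ s, |γ i| = |α i| + t * (β i * σ i) := by
      intro i hi
      have : |γ i| = γ i * σ i := by
        rw [← abs_of_nonneg (hγσ i hi), abs_mul, hσ1, mul_one]
      rw [this, ← hσ i]; simp only [γ]; ring
    have hsabs : ∑ i ∈ s, |γ i| = ∑ i ∈ s, |α i| := by
      rw [Finset.sum_congr rfl habs, Finset.sum_add_distrib, ← Finset.mul_sum, b2]; ring
    have hfin := key γ ⟨k, hk.1, hγk⟩
      (by simp only [γ]; rw [Finset.sum_add_distrib, ← Finset.mul_sum, h0, b1]; ring)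
      (by
        simp only [γ, add_smul, mul_smul]
        rw [Finset.sum_add_distrib, ← Finset.smul_sum, h1, b3]; simp)
    have hsf : ∑ i ∈ s, γ i * f (z i) =
        ∑ i ∈ s, α i * f (z i) + t * ∑ i ∈ s, β i * f (z i) := by
      rw [Finset.mul_sum, ← Finset.sum_add_distrib]
      exact Finset.sum_congr rfl fun i _ => by simp only [γ]; ring
    rw [hsabs, hsf] at hfin
    have := mul_nonneg ht b4
    linarith
  · -- base case: at most `n + 2` points
    let P := s.filter fun i => 0 < α i
    let Q := s.filter fun i => ¬ 0 < α i
    have hPQ : ∀ g : ι → ℝ, ∑ i ∈ P, g i + ∑ i ∈ Q, g i = ∑ i ∈ s, g i :=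
      fun g => Finset.sum_filter_add_sum_filter_not s _ g
    have hPQE : ∑ i ∈ P, α i • z i + ∑ i ∈ Q, α i • z i = ∑ i ∈ s, α i • z i :=
      Finset.sum_filter_add_sum_filter_not s _ _
    have hPQc : P.card + Q.card = s.card := Finset.card_filter_add_card_filter_not _
    have hP : ∀ i ∈ P, 0 < α i := fun i hi => (Finset.mem_filter.1 hi).2
    have hQ : ∀ i ∈ Q, α i < 0 := fun i hi =>
      lt_of_le_of_ne (not_lt.1 (Finset.mem_filter.1 hi).2) (hzero i (Finset.mem_filter.1 hi).1)
    have hsα := hPQ α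
    rw [h0] at hsα
    have hsz := hPQE
    rw [h1] at hsz
    have hPne : P.Nonempty := by
      by_contra hcon
      rw [Finset.not_nonempty_iff_eq_empty] at hcon
      have hQne : Q.Nonempty := by
        rw [← Finset.card_pos]
        rw [hcon, Finset.card_empty] at hPQc
        omega
      rw [hcon, Finset.sum_empty] at hsα
      have := Finset.sum_neg hQ hQne
      linarith
    let T := ∑ i ∈ P, α i
    have hT : 0 < T := Finset.sum_pos hP hPne
    have hQT : ∑ i ∈ Q, α i = -T := by simp only [T]; linarith
    have hQne : Q.Nonempty := by
      by_contra hcon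
      rw [Finset.not_nonempty_iff_eq_empty] at hcon
      rw [hcon, Finset.sum_empty] at hQT
      linarith
    have hbP := jensen_approx K hK (fun x => -f x)
      (fun x hx y hy => by have := hmid' x hx y hy; linarith) B
      (fun x hx => by rw [abs_neg]; exact hB x hx) z hz P (fun i => T⁻¹ * α i)
      (fun i hi => mul_nonneg (inv_nonneg.2 hT.le) (hP i hi).le)
      (by rw [← Finset.mul_sum]; exact inv_mul_cancel₀ hT.ne')
    have hbQ := jensen_approx K hK f hmid B hB z hz Q (fun i => T⁻¹ * (-α i))
      (fun i hi => mul_nonneg (inv_nonneg.2 hT.le) (by linarith [hQ i hi]))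
      (by rw [← Finset.mul_sum, Finset.sum_neg_distrib, hQT, neg_neg]; exact inv_mul_cancel₀ hT.ne')
    have hpt : ∑ i ∈ P, (T⁻¹ * α i) • z i = ∑ i ∈ Q, (T⁻¹ * (-α i)) • z i := by
      simp only [mul_smul, ← Finset.smul_sum, neg_smul, Finset.sum_neg_distrib]
      rw [eq_neg_of_add_eq_zero_left hsz]
    have hnum := log_total n (P.card - 1) (Q.card - 1) hn (by
      have := hPne.card_pos
      have := hQne.card_pos
      omega)
    have hsf := hPQ (fun i => α i * f (z i))
    have hsa : ∑ i ∈ s, |α i| = 2 * T := by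
      rw [← hPQ, Finset.sum_congr rfl fun i hi => abs_of_pos (hP i hi),
        Finset.sum_congr (s₁ := Q) rfl fun i hi => abs_of_neg (hQ i hi),
        Finset.sum_neg_distrib, hQT]
      simp only [T]; ring
    simp only [hpt, mul_assoc, ← Finset.mul_sum, mul_neg, neg_mul, Finset.sum_neg_distrib]
      at hbP hbQ
    have hfin : T⁻¹ * ∑ i ∈ s, α i * f (z i) ≤ (Nat.log 2 n : ℝ) + 2 := by
      rw [← hsf, mul_add]
      linarith
    rw [inv_mul_le_iff₀ hT] at hfin
    rw [hsa]
    linarith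

/-- Upper bound of Theorem 3.1: `w₂(n) ≤ (1/2)⌊log₂ n⌋ + 5/4`. -/
theorem whitney_upper_bound_dim_n (n : ℕ) (hn : 1 ≤ n) (K : Set (Fin n → ℝ))
    (hne : K.Nonempty) (hcl : IsClosed K) (hbd : Bornology.IsBounded K) (hconv : Convex ℝ K)
    (f : (Fin n → ℝ) → ℝ) (hf : ContinuousOn f K) (hω : diffBound 2 K f 1) :
    ∃ (c : ℝ) (a : Fin n → ℝ), ∀ x ∈ K,
      |f x - (c + ∑ i, a i * x i)| ≤ (1 / 2) * (Nat.log 2 n : ℝ) + 5 / 4 := by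
  have hcomp : IsCompact K := Metric.isCompact_of_isClosed_isBounded hcl hbd
  obtain ⟨B, hB⟩ := hcomp.exists_bound_of_continuousOn hf
  have hB' : ∀ x ∈ K, |f x| ≤ B := fun x hx => hB x hx
  have hjen : ∀ x ∈ K, ∀ y ∈ K,
      |f x - 2 * f ((1 / 2 : ℝ) • x + (1 / 2 : ℝ) • y) + f y| ≤ 1 := by
    intro x hx y hy
    have hm : (1 / 2 : ℝ) • x + (1 / 2 : ℝ) • y ∈ K :=
      hconv hx hy (by norm_num) (by norm_num) (by norm_num)
    have e1 : x + (1 : ℝ) • ((1 / 2 : ℝ) • (y - x)) = (1 / 2 : ℝ) • x + (1 / 2 : ℝ) • y := by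
      module
    have e2 : x + (2 : ℝ) • ((1 / 2 : ℝ) • (y - x)) = y := by module
    have h := hω x ((1 / 2 : ℝ) • (y - x)) (by
      intro j hj
      interval_cases j
      · simpa using hx
      · rw [Nat.cast_one, e1]; exact hm
      · rw [Nat.cast_ofNat, e2]; exact hy)
    simp only [Finset.sum_range_succ, Finset.sum_range_zero, Nat.cast_zero, Nat.cast_one,
      Nat.cast_ofNat, e1, e2, zero_smul, add_zero] at h
    norm_num at h
    convert h using 2
    norm_num
    try ring
  let D : ℝ := (Nat.log 2 n : ℝ) + 5 / 2
  let G : Set ((Fin n → ℝ) × ℝ) := (fun x => (x, f x)) '' K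
  let H : Set ((Fin n → ℝ) × ℝ) := (fun x => (x, f x - D)) '' K
  have hG : IsCompact (convexHull ℝ G) :=
    compact_hull G (hcomp.image_of_continuousOn (continuousOn_id.prodMk hf)) (hne.image _)
  have hH : IsCompact (convexHull ℝ H) :=
    compact_hull H (hcomp.image_of_continuousOn
      (continuousOn_id.prodMk (hf.sub continuousOn_const))) (hne.image _)
  have hdisj : Disjoint (convexHull ℝ H) (convexHull ℝ G) := by
    rw [Set.disjoint_left]
    intro p hpH hpG
    classical
    obtain ⟨ι, _, w, a, hw0, hw1, ha, hp⟩ := mem_convexHull_iff_exists_fintype.1 hpH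
    obtain ⟨κ, _, v, b, hv0, hv1, hb, hq⟩ := mem_convexHull_iff_exists_fintype.1 hpG
    choose x hxK hx using ha
    choose y hyK hy using hb
    have key := dual_bound n hn K hconv f
      (fun x hx y hy => by have := (abs_le.1 (hjen x hx y hy)).1; linarith)
      (fun x hx y hy => by have := (abs_le.1 (hjen x hx y hy)).2; linarith) B hB'
      (Sum.elim x y) (by rintro (i | i); exacts [hxK i, hyK i]) _ Finset.univ
      (Sum.elim w fun j => -v j) rfl
      (by simp [Fintype.sum_sum_type, hw1, hv1])
      (by
        have h1 := congrArg Prod.fst (hp.trans hq.symm)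
        simp only [Prod.fst_sum, ← hx, ← hy, Prod.smul_fst] at h1
        simp [Fintype.sum_sum_type, h1])
    have h2 := congrArg Prod.snd (hp.trans hq.symm)
    simp only [Prod.snd_sum, ← hx, ← hy, Prod.smul_snd, smul_eq_mul, mul_sub,
      Finset.sum_sub_distrib, ← Finset.sum_mul, hw1] at h2
    simp only [Fintype.sum_sum_type, Sum.elim_inl, Sum.elim_inr, abs_neg, neg_mul,
      Finset.sum_neg_distrib, fun i => abs_of_nonneg (hw0 i), fun i => abs_of_nonneg (hv0 i),
      hw1, hv1] at key
    simp only [D] at h2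
    linarith
  obtain ⟨g, u, v, hgu, huv, hgv⟩ := geometric_hahn_banach_compact_closed
    (convex_convexHull ℝ H) hH (convex_convexHull ℝ G) hG.isClosed hdisj
  let s := g (0, 1)
  have hgs : ∀ (x : Fin n → ℝ) (t : ℝ), g (x, t) = g (x, 0) + t * s := by
    intro x t
    have : (x, t) = (x, (0 : ℝ)) + t • ((0 : Fin n → ℝ), (1 : ℝ)) := by simp
    rw [this, map_add, map_smul, smul_eq_mul]
  have hlow : ∀ x ∈ K, g (x, 0) + (f x - D) * s < u := by
    intro x hx
    rw [← hgs]
    exact hgu _ (subset_convexHull ℝ H ⟨x, hx, rfl⟩)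
  have hup : ∀ x ∈ K, v < g (x, 0) + f x * s := by
    intro x hx
    rw [← hgs]
    exact hgv _ (subset_convexHull ℝ G ⟨x, hx, rfl⟩)
  have hD : 0 < D := by positivity
  have hs : 0 < s := by
    obtain ⟨x, hx⟩ := hne
    have h1 := hlow x hx
    have h2 := hup x hx
    have : 0 < D * s := by linarith
    exact (pos_iff_pos_of_mul_pos this).1 hD
  have hlin : ∀ x : Fin n → ℝ, g (x, 0) = ∑ i, x i * g (Pi.single i 1, 0) := by
    intro x
    have h := LinearMap.pi_apply_eq_sum_univ
      ((g : (Fin n → ℝ) × ℝ →ₗ[ℝ] ℝ).comp (LinearMap.inl ℝ (Fin n → ℝ) ℝ)) x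
    simp only [LinearMap.comp_apply, LinearMap.inl_apply, smul_eq_mul] at h
    refine h.trans (Finset.sum_congr rfl fun i _ => ?_)
    have : (fun j => if i = j then (1 : ℝ) else 0) = Pi.single i 1 := by
      ext j; simp [Pi.single_apply, eq_comm]
    rw [this]; rfl
  refine ⟨u / s + D / 2, fun i => -(g (Pi.single i 1, 0) / s), fun x hx => ?_⟩
  have hsum : ∑ i, -(g (Pi.single i 1, 0) / s) * x i = -(g (x, 0) / s) := by
    rw [hlin, Finset.sum_div, ← Finset.sum_neg_distrib]
    exact Finset.sum_congr rfl fun i _ => by ring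
  rw [hsum]
  have h1 := hlow x hx
  have h2 := hup x hx
  have h3 : f x - D < (u - g (x, 0)) / s := by rw [lt_div_iff₀ hs]; linarith
  have h4 : (u - g (x, 0)) / s < f x := by rw [div_lt_iff₀ hs]; linarith
  rw [sub_div] at h3 h4
  have hDe : 1 / 2 * (Nat.log 2 n : ℝ) + 5 / 4 = D / 2 := by simp only [D]; ring
  rw [hDe, abs_le]
  constructor <;> linarith
end

section
/- For every n ≥ 1 there exist a nonempty compact convex set K ⊆ ℝⁿ and a continuous function f : K → ℝ with ω₂(f;K) ≤ 1 such that for every affine function φ on ℝⁿ one has sup_{x∈K} |f(x) − φ(x)| ≥ (1/2) log₂(⌊n/2⌋ + 1). (Lower bound of Theorem 3.1: w₂(n) ≥ (1/2) log₂(⌊n/2⌋+1).) -/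
open Finset

open Real in
/-- pointwise second difference bounds for `negMulLog` -/
lemma nml_bounds (p q r : ℝ) (hp : 0 ≤ p) (hq : 0 ≤ q) (hr : p + q = 2 * r) :
    0 ≤ 2 * negMulLog r - negMulLog p - negMulLog q ∧
    2 * negMulLog r - negMulLog p - negMulLog q ≤ (p + q) * log 2 := by
  constructor
  · have hc : ConcaveOn ℝ (Set.Ici (0 : ℝ)) negMulLog := concaveOn_negMulLog
    have h := hc.2 (Set.mem_Ici.2 hp) (Set.mem_Ici.2 hq)
      (by norm_num : (0 : ℝ) ≤ 1/2) (by norm_num : (0 : ℝ) ≤ 1/2) (by norm_num)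
    have e : (1/2 : ℝ) • p + (1/2 : ℝ) • q = r := by simp only [smul_eq_mul]; linarith
    rw [e] at h
    simp only [smul_eq_mul] at h
    linarith
  · rcases hp.eq_or_lt with rfl | hp'
    · rcases hq.eq_or_lt with rfl | hq'
      · have : r = 0 := by linarith
        simp [this]
      · have : q = 2 * r := by linarith
        have hr0 : r ≠ 0 := by intro h; subst h; linarith
        subst this
        simp only [negMulLog]
        rw [log_mul (by norm_num) hr0]
        simp
        linarith
    · have hr0 : 0 < r := by linarith
      have h1 : log (2 * r) = log 2 + log r := log_mul (by norm_num) hr0.ne'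
      have h2 : p * log p ≤ p * log (2 * r) :=
        mul_le_mul_of_nonneg_left (log_le_log hp' (by linarith)) hp
      have h3 : q * log q ≤ q * log (2 * r) := by
        rcases hq.eq_or_lt with rfl | hq'
        · simp
        · exact mul_le_mul_of_nonneg_left (log_le_log hq' (by linarith)) hq
      rw [h1] at h2 h3
      simp only [negMulLog]
      have h4 : (p + q) * log r = 2 * r * log r := by rw [hr]
      nlinarith

/-- entropy on the solid simplex -/
noncomputable def entH {m : ℕ} (x : Fin m → ℝ) : ℝ :=
  Real.negMulLog (1 - ∑ i, x i) + ∑ i, Real.negMulLog (x i)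

/-- solid simplex -/
def simS (m : ℕ) : Set (Fin m → ℝ) := {x | (∀ i, 0 ≤ x i) ∧ ∑ i, x i ≤ 1}

lemma entH_cont {m : ℕ} : Continuous (entH (m := m)) := by
  unfold entH
  have := Real.continuous_negMulLog
  fun_prop

lemma entH_bounds {m : ℕ} (x y w : Fin m → ℝ) (hx : x ∈ simS m) (hw : w ∈ simS m)
    (h : ∀ i, x i + w i = 2 * y i) :
    0 ≤ 2 * entH y - entH x - entH w ∧ 2 * entH y - entH x - entH w ≤ 2 * Real.log 2 := by
  have hs : ∑ i, x i + ∑ i, w i = 2 * ∑ i, y i := by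
    rw [← sum_add_distrib, mul_sum]; exact sum_congr rfl fun i _ => h i
  have h0 := nml_bounds (1 - ∑ i, x i) (1 - ∑ i, w i) (1 - ∑ i, y i)
    (by linarith [hx.2]) (by linarith [hw.2]) (by linarith)
  have hi := fun i => nml_bounds (x i) (w i) (y i) (hx.1 i) (hw.1 i) (h i)
  have e : 2 * ∑ i, Real.negMulLog (y i) - ∑ i, Real.negMulLog (x i)
      - ∑ i, Real.negMulLog (w i)
      = ∑ i, (2 * Real.negMulLog (y i) - Real.negMulLog (x i) - Real.negMulLog (w i)) := by
    rw [sum_sub_distrib, sum_sub_distrib, mul_sum]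
  have l := sum_nonneg (s := univ) fun i _ => (hi i).1
  have u := sum_le_sum (s := univ) fun i _ => (hi i).2
  rw [← e] at l u
  rw [← sum_mul, sum_add_distrib] at u
  unfold entH
  constructor
  · linarith [h0.1]
  · have := h0.2
    nlinarith

lemma exists_vertex {m : ℕ} (b : Fin m → ℝ) :
    ∃ v : Fin m → ℝ, v ∈ simS m ∧ entH v = 0 ∧
      ∑ i, b i * (1 / ((m : ℝ) + 1)) ≤ ∑ i, b i * v i := by
  have hm : (0 : ℝ) < m + 1 := by positivity
  by_cases ht : ∑ i, b i ≤ 0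
  · refine ⟨0, ⟨by simp, by simp⟩, by simp [entH], ?_⟩
    rw [← sum_mul]
    simp only [Pi.zero_apply, mul_zero, sum_const_zero]
    exact mul_nonpos_of_nonpos_of_nonneg ht (by positivity)
  · push Not at ht
    rw [← sum_mul]
    obtain ⟨k, hk⟩ : ∃ k, (∑ i, b i) * (1 / ((m : ℝ) + 1)) ≤ b k := by
      by_contra! hcon
      have h1 := sum_le_sum (s := univ) fun i _ => (hcon i).le
      simp only [sum_const, card_univ, Fintype.card_fin, nsmul_eq_mul] at h1
      have h2 : (m : ℝ) * ((∑ i, b i) * (1 / ((m : ℝ) + 1))) < ∑ i, b i := by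
        rw [mul_one_div, mul_div_assoc', div_lt_iff₀ hm]
        nlinarith
      linarith
    refine ⟨Pi.single k 1, ⟨fun i => ?_, by simp⟩, ?_, by simpa [Pi.single_apply] using hk⟩
    · by_cases h : i = k
      · subst h; simp
      · simp [h]
    · unfold entH
      have : ∀ i, Real.negMulLog ((Pi.single k 1 : Fin m → ℝ) i) = 0 := by
        intro i
        by_cases h : i = k
        · subst h; simp
        · simp [h]
      simp [this]

lemma simS_center (m : ℕ) : (fun _ => 1 / ((m : ℝ) + 1)) ∈ simS m := by
  refine ⟨fun i => by positivity, ?_⟩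
  simp only [sum_const, card_univ, Fintype.card_fin, nsmul_eq_mul]
  rw [mul_one_div, div_le_one (by positivity)]
  linarith

lemma entH_center (m : ℕ) : entH (fun _ : Fin m => 1 / ((m : ℝ) + 1)) = Real.log (m + 1) := by
  have hm : (m : ℝ) + 1 ≠ 0 := by positivity
  unfold entH
  simp only [sum_const, card_univ, Fintype.card_fin, nsmul_eq_mul]
  have : 1 - (m : ℝ) * (1 / (m + 1)) = 1 / (m + 1) := by field_simp; ring
  rw [this]
  simp only [Real.negMulLog, one_div, Real.log_inv]
  field_simp
  ring

lemma simS_le_one {m : ℕ} {x : Fin m → ℝ} (hx : x ∈ simS m) (i : Fin m) : x i ≤ 1 :=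
  (single_le_sum (fun j _ => hx.1 j) (mem_univ i)).trans hx.2

lemma simS_closed (m : ℕ) : IsClosed (simS m) := by
  have : simS m = (⋂ i, {x | 0 ≤ x i}) ∩ {x | ∑ i, x i ≤ 1} := by
    ext x; simp [simS]
  rw [this]
  refine (isClosed_iInter fun i => isClosed_le (by fun_prop) (by fun_prop)).inter
    (isClosed_le (by fun_prop) (by fun_prop))

lemma simS_convex (m : ℕ) : Convex ℝ (simS m) := by
  intro x hx y hy a b ha hb hab
  refine ⟨fun i => ?_, ?_⟩
  · have := hx.1 i
    have := hy.1 i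
    simp only [Pi.add_apply, Pi.smul_apply, smul_eq_mul]
    positivity
  · simp only [Pi.add_apply, Pi.smul_apply, smul_eq_mul]
    rw [sum_add_distrib, ← mul_sum, ← mul_sum]
    nlinarith [hx.2, hy.2]

/-- Lower bound of Theorem 3.1: `w₂(n) ≥ (1/2) log₂(⌊n/2⌋ + 1)`. -/
theorem whitney_lower_bound_dim_n (n : ℕ) (hn : 1 ≤ n) :
    ∃ (K : Set (Fin n → ℝ)) (f : (Fin n → ℝ) → ℝ),
      K.Nonempty ∧ IsCompact K ∧ Convex ℝ K ∧ ContinuousOn f K ∧ diffBound 2 K f 1 ∧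
      ∀ (c : ℝ) (a : Fin n → ℝ), ∃ x ∈ K,
        (1 / 2) * Real.logb 2 ((n / 2 : ℕ) + 1) ≤ |f x - (c + ∑ i, a i * x i)| := by
  obtain ⟨m, hm⟩ : ∃ m, m = n / 2 := ⟨_, rfl⟩
  rw [← hm]
  have hmn : 2 * m ≤ n := by omega
  obtain ⟨e, he⟩ : ∃ e : Fin m ⊕ Fin m → Fin n, Function.Injective e := by
    have : Fintype.card (Fin m ⊕ Fin m) ≤ Fintype.card (Fin n) := by simp; omega
    obtain ⟨e⟩ := Function.Embedding.nonempty_of_card_le this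
    exact ⟨e, e.injective⟩
  let X : (Fin n → ℝ) → Fin m → ℝ := fun z i => z (e (Sum.inl i))
  let Y : (Fin n → ℝ) → Fin m → ℝ := fun z i => z (e (Sum.inr i))
  have hX : Continuous X := by fun_prop
  have hY : Continuous Y := by fun_prop
  have hl2 : 0 < Real.log 2 := Real.log_pos (by norm_num)
  let K : Set (Fin n → ℝ) := Set.Icc 0 1 ∩ (X ⁻¹' simS m ∩ Y ⁻¹' simS m)
  let f : (Fin n → ℝ) → ℝ := fun z => (entH (X z) - entH (Y z)) / (2 * Real.log 2)
  let Z : (Fin m → ℝ) → (Fin m → ℝ) → Fin n → ℝ := fun x y =>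
    Function.extend e (Sum.elim x y) 0
  have hXZ : ∀ x y, X (Z x y) = x := by
    intro x y; funext i; simp [X, Z, he.extend_apply]
  have hYZ : ∀ x y, Y (Z x y) = y := by
    intro x y; funext i; simp [Y, Z, he.extend_apply]
  have hZK : ∀ x ∈ simS m, ∀ y ∈ simS m, Z x y ∈ K := by
    intro x hx y hy
    have key : ∀ i, 0 ≤ Z x y i ∧ Z x y i ≤ 1 := by
      intro i
      by_cases hi : ∃ s, e s = i
      · obtain ⟨s, rfl⟩ := hi
        simp only [Z, he.extend_apply]
        rcases s with s | s
        · exact ⟨hx.1 s, simS_le_one hx s⟩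
        · exact ⟨hy.1 s, simS_le_one hy s⟩
      · simp only [Z, Function.extend_apply' _ _ _ hi]
        simp
    refine ⟨⟨fun i => (key i).1, fun i => (key i).2⟩, ?_, ?_⟩
    · simpa only [Set.mem_preimage, hXZ] using hx
    · simpa only [Set.mem_preimage, hYZ] using hy
  have hsum : ∀ (a : Fin n → ℝ) x y, ∑ i, a i * Z x y i
      = ∑ i, a (e (Sum.inl i)) * x i + ∑ i, a (e (Sum.inr i)) * y i := by
    intro a x y
    rw [← Fintype.sum_of_injective e he (fun s => a (e s) * Sum.elim x y s)
      (fun i => a i * Z x y i)]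
    · simp
    · intro i hi
      simp only [Z]
      rw [Function.extend_apply' _ _ _ hi]
      simp
    · intro s
      simp only [Z, he.extend_apply]
  have hfZ : ∀ x y, f (Z x y) = (entH x - entH y) / (2 * Real.log 2) := by
    intro x y; simp only [f, hXZ, hYZ]
  have hcS := simS_center m
  refine ⟨K, f, ⟨_, hZK _ hcS _ hcS⟩, ?_, ?_, ?_, ?_, ?_⟩
  · exact isCompact_Icc.inter_right
      (((simS_closed m).preimage hX).inter ((simS_closed m).preimage hY))
  · refine (convex_Icc 0 1).inter (Convex.inter ?_ ?_)
    · intro x hx y hy a b ha hb hab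
      exact simS_convex m hx hy ha hb hab
    · intro x hx y hy a b ha hb hab
      exact simS_convex m hx hy ha hb hab
  · have := entH_cont.comp hX
    have := entH_cont.comp hY
    exact (((entH_cont.comp hX).sub (entH_cont.comp hY)).div_const _).continuousOn
  · intro x h hK
    have k0 := hK 0 (by norm_num)
    have k2 := hK 2 (by norm_num)
    have b1 := entH_bounds _ (X (x + ((1 : ℕ) : ℝ) • h)) _ k0.2.1 k2.2.1
      (by intro i; simp [X]; ring)
    have b2 := entH_bounds _ (Y (x + ((1 : ℕ) : ℝ) • h)) _ k0.2.2 k2.2.2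
      (by intro i; simp [Y]; ring)
    rw [sum_range_succ, sum_range_succ, sum_range_succ, sum_range_zero]
    have : (0 + (-1 : ℝ) ^ (2 - 0) * ((2 : ℕ).choose 0 : ℝ) * f (x + ((0 : ℕ) : ℝ) • h)
        + (-1 : ℝ) ^ (2 - 1) * ((2 : ℕ).choose 1 : ℝ) * f (x + ((1 : ℕ) : ℝ) • h)
        + (-1 : ℝ) ^ (2 - 2) * ((2 : ℕ).choose 2 : ℝ) * f (x + ((2 : ℕ) : ℝ) • h))
        = ((2 * entH (Y (x + ((1 : ℕ) : ℝ) • h)) - entH (Y (x + ((0 : ℕ) : ℝ) • h))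
            - entH (Y (x + ((2 : ℕ) : ℝ) • h)))
          - (2 * entH (X (x + ((1 : ℕ) : ℝ) • h)) - entH (X (x + ((0 : ℕ) : ℝ) • h))
            - entH (X (x + ((2 : ℕ) : ℝ) • h)))) / (2 * Real.log 2) := by
      norm_num [f]
      ring
    rw [this, abs_div, abs_of_pos (show 0 < 2 * Real.log 2 by positivity),
      div_le_one (by positivity), abs_le]
    constructor <;> linarith [b1.1, b1.2, b2.1, b2.2]
  · intro c a
    set cen : Fin m → ℝ := fun _ => 1 / ((m : ℝ) + 1) with hcen
    have hL : Real.log ((m : ℝ) + 1) / (2 * Real.log 2) = 1 / 2 * Real.logb 2 ((m : ℝ) + 1) := by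
      unfold Real.logb; field_simp
    by_cases h0 : c + ∑ i, a i * Z cen cen i ≤ 0
    · obtain ⟨v, hv, hv0, hvs⟩ := exists_vertex (fun i => - a (e (Sum.inr i)))
      refine ⟨Z cen v, hZK _ hcS _ hv, ?_⟩
      rw [hfZ, hv0, entH_center, sub_zero, hL]
      rw [hsum] at h0 ⊢
      simp only [neg_mul, sum_neg_distrib] at hvs
      simp only [hcen] at h0 ⊢
      refine le_trans ?_ (le_abs_self _)
      linarith
    · obtain ⟨v, hv, hv0, hvs⟩ := exists_vertex (fun i => a (e (Sum.inl i)))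
      refine ⟨Z v cen, hZK _ hv _ hcS, ?_⟩
      rw [hfZ, hv0, entH_center, zero_sub, neg_div, hL]
      rw [hsum] at h0 ⊢
      simp only [hcen] at h0 ⊢
      refine le_trans ?_ (neg_le_abs _)
      linarith
end

section
/- Let X be a finite-dimensional real normed space with closed unit ball B_X. (i) If w ≥ 0 is such that every continuous f : B_X → ℝ with ω₂(f;B_X) ≤ 1 admits an affine function φ with sup_{x∈B_X}|f(x)−φ(x)| ≤ w, then every continuous 1-homogeneous f : X → ℝ with ω₂(f;B_X) ≤ 1 admits a linear functional x* on X with sup_{x∈B_X}|f(x)−x*(x)| ≤ w. (ii) Conversely, if v ≥ 0 is such that every continuous 1-homogeneous f : X → ℝ with ω₂(f;B_X) ≤ 1 admits a linear functional x* with sup_{x∈B_X}|f(x)−x*(x)| ≤ v, then every continuous f : B_X → ℝ with ω₂(f;B_X) ≤ 1 admits an affine function φ with sup_{x∈B_X}|f(x)−φ(x)| ≤ 4v + 3/2. (Proposition 2.2: v₂(X) ≤ w₂(X) ≤ 4v₂(X) + 3/2.) -/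
open Finset

lemma diffBound_two_iff {X : Type*} [NormedAddCommGroup X] [NormedSpace ℝ X] (f : X → ℝ) (c : ℝ) :
    diffBound 2 (Metric.closedBall (0 : X) 1) f c ↔
      ∀ a b : X, ‖a‖ ≤ 1 → ‖b‖ ≤ 1 → |f a + f b - 2 * f ((1 / 2 : ℝ) • (a + b))| ≤ c := by
  constructor
  · intro H a b ha hb
    have e1 : a + ((1 : ℕ) : ℝ) • ((1 / 2 : ℝ) • (b - a)) = (1 / 2 : ℝ) • (a + b) := by
      push_cast; module
    have e2 : a + ((2 : ℕ) : ℝ) • ((1 / 2 : ℝ) • (b - a)) = b := by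
      push_cast; module
    have e0 : a + ((0 : ℕ) : ℝ) • ((1 / 2 : ℝ) • (b - a)) = a := by
      push_cast; module
    have h := H a ((1 / 2 : ℝ) • (b - a)) (by
      intro j hj
      rw [mem_closedBall_zero_iff]
      interval_cases j
      · rw [e0]; exact ha
      · rw [e1, norm_smul]
        have := norm_add_le a b
        norm_num
        linarith
      · rw [e2]; exact hb)
    simp only [Finset.sum_range_succ, Finset.sum_range_zero, e0, e1, e2] at h
    norm_num at h
    convert h using 2
    norm_num; ring
  · intro H x h hx
    have h0 := hx 0 (by norm_num)
    have h2 := hx 2 (by norm_num)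
    rw [mem_closedBall_zero_iff] at h0 h2
    have hk := H _ _ h0 h2
    have e1 : (1 / 2 : ℝ) • (x + ((0 : ℕ) : ℝ) • h + (x + ((2 : ℕ) : ℝ) • h))
        = x + ((1 : ℕ) : ℝ) • h := by
      push_cast; module
    rw [e1] at hk
    simp only [Finset.sum_range_succ, Finset.sum_range_zero]
    convert hk using 2
    norm_num; ring

/-- The homogenization of an odd function. -/
noncomputable def homog {X : Type*} [NormedAddCommGroup X] [NormedSpace ℝ X] (o : X → ℝ) (x : X) :
    ℝ := ‖x‖ * o (‖x‖⁻¹ • x)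

section
variable {X : Type*} [NormedAddCommGroup X] [NormedSpace ℝ X]

lemma norm_inv_smul_le (x : X) : ‖‖x‖⁻¹ • x‖ ≤ 1 := by
  rw [norm_smul, norm_inv, norm_norm]
  exact inv_mul_le_one

lemma homog_smul (o : X → ℝ) (ho : ∀ x, o (-x) = -o x) (a : ℝ) (x : X) :
    homog o (a • x) = a * homog o x := by
  unfold homog
  rcases lt_trichotomy a 0 with h | h | h
  · have : ‖a • x‖⁻¹ • a • x = -(‖x‖⁻¹ • x) := by
      rw [norm_smul, Real.norm_of_nonpos h.le, smul_smul, ← neg_smul]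
      congr 1
      rw [mul_inv, inv_neg, neg_mul, neg_mul, mul_right_comm, inv_mul_cancel₀ h.ne, one_mul]
    rw [this, ho, norm_smul, Real.norm_of_nonpos h.le]; ring
  · subst h; simp
  · have : ‖a • x‖⁻¹ • a • x = (‖x‖⁻¹ • x) := by
      rw [norm_smul, Real.norm_of_nonneg h.le, smul_smul]
      congr 1
      rw [mul_inv]; field_simp
    rw [this, norm_smul, Real.norm_of_nonneg h.le]; ring

lemma homog_continuous [FiniteDimensional ℝ X] (o : X → ℝ)
    (hc : ContinuousOn o (Metric.closedBall 0 1)) : Continuous (homog o) := by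
  rw [continuous_iff_continuousAt]
  intro x
  by_cases hx : x = 0
  · subst hx
    have : ProperSpace X := FiniteDimensional.proper ℝ X
    obtain ⟨C, hC⟩ := (isCompact_closedBall (0 : X) 1).exists_bound_of_continuousOn hc
    unfold ContinuousAt
    have h0 : homog o 0 = 0 := by simp [homog]
    rw [h0]
    refine squeeze_zero_norm (a := fun x : X => ‖x‖ * C) ?_ ?_
    · intro y
      unfold homog
      rw [norm_mul, norm_norm]
      exact mul_le_mul_of_nonneg_left
        (hC _ (mem_closedBall_zero_iff.2 (norm_inv_smul_le y))) (norm_nonneg _)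
    · have : Continuous (fun x : X => ‖x‖ * C) := by fun_prop
      simpa using this.tendsto 0
  · have h1 : ContinuousOn (homog o) {y | y ≠ 0} := by
      unfold homog
      refine ContinuousOn.mul (by fun_prop) ?_
      refine hc.comp (t := Metric.closedBall 0 1) (f := fun x : X => ‖x‖⁻¹ • x) ?_ ?_
      · refine ContinuousOn.smul (ContinuousOn.inv₀ (by fun_prop) ?_) (by fun_prop)
        intro y hy; simpa using hy
      · intro y _
        exact mem_closedBall_zero_iff.2 (norm_inv_smul_le y)
    exact h1.continuousAt (isOpen_ne.mem_nhds hx)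

lemma homog_unit (o : X → ℝ) (x : X) (hx : ‖x‖ = 1) : homog o x = o x := by
  simp [homog, hx]

lemma homog_dist [FiniteDimensional ℝ X] (o : X → ℝ) (ho : ∀ x, o (-x) = -o x)
    (hc : ContinuousOn o (Metric.closedBall 0 1))
    (hd : ∀ a b : X, ‖a‖ ≤ 1 → ‖b‖ ≤ 1 → |o a + o b - 2 * o ((1 / 2 : ℝ) • (a + b))| ≤ 1)
    (x : X) (hx : ‖x‖ ≤ 1) : |o x - homog o x| ≤ 1 := by
  have : ProperSpace X := FiniteDimensional.proper ℝ X
  have hG : ContinuousOn (fun x => |o x - homog o x|) (Metric.closedBall 0 1) :=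
    (hc.sub (homog_continuous o hc).continuousOn).abs
  obtain ⟨y, hy, hmax⟩ := (isCompact_closedBall (0 : X) 1).exists_isMaxOn ⟨0, by simp⟩ hG
  rw [mem_closedBall_zero_iff] at hy
  have hm : ∀ z : X, ‖z‖ ≤ 1 → |o z - homog o z| ≤ |o y - homog o y| := fun z hz =>
    hmax (mem_closedBall_zero_iff.2 hz)
  refine (hm x hx).trans ?_
  have o0 : o 0 = 0 := by
    have := ho 0
    rw [neg_zero] at this; linarith
  by_cases hy0 : y = 0
  · subst hy0; simp [homog, o0]
  have hyp : 0 < ‖y‖ := norm_pos_iff.2 hy0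
  rcases le_total ‖y‖ (1 / 2) with h | h
  · have h2 : ‖(2 : ℝ) • y‖ ≤ 1 := by rw [norm_smul]; norm_num; linarith
    have h3 := hd 0 ((2 : ℝ) • y) (by simp) h2
    have e : (1 / 2 : ℝ) • (0 + (2 : ℝ) • y) = y := by module
    have h4 := hm _ h2
    rw [homog_smul o ho] at h4
    rw [e, o0] at h3
    grind
  · set r := ‖y‖⁻¹ with hr
    have hr1 : 1 ≤ r := (one_le_inv₀ hyp).2 hy
    have hr2 : r ≤ 2 := by
      rw [hr, inv_le_comm₀ hyp (by norm_num)]; linarith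
    have hry : r * ‖y‖ = 1 := inv_mul_cancel₀ hyp.ne'
    have h1 : ‖r • y‖ = 1 := by
      rw [norm_smul, Real.norm_of_nonneg (by linarith), hry]
    have h2 : ‖(2 - r) • y‖ ≤ 1 := by
      rw [norm_smul, Real.norm_of_nonneg (by linarith)]; nlinarith
    have h3 := hd _ _ h1.le h2
    have e : (1 / 2 : ℝ) • (r • y + (2 - r) • y) = y := by module
    have h4 := hm _ h2
    have h5 := homog_unit o _ h1
    rw [homog_smul o ho] at h4 h5
    rw [e, ← h5] at h3
    have : o y - homog o y = -(1/2) * (r * homog o y + o ((2 - r) • y) - 2 * o y)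
      + (1/2) * (o ((2 - r) • y) - (2 - r) * homog o y) := by ring
    rw [abs_le] at h3
    have h6 := abs_le.1 h4
    have : |o y - homog o y| ≤ 1/2 + 1/2 * |o y - homog o y| := by
      rw [abs_le]; constructor <;> linarith [h3.1, h3.2, h6.1, h6.2]
    linarith

lemma homog_diff_unit [FiniteDimensional ℝ X] (o : X → ℝ) (ho : ∀ x, o (-x) = -o x)
    (hc : ContinuousOn o (Metric.closedBall 0 1))
    (hd : ∀ a b : X, ‖a‖ ≤ 1 → ‖b‖ ≤ 1 → |o a + o b - 2 * o ((1 / 2 : ℝ) • (a + b))| ≤ 1)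
    (a b : X) (ha : ‖a‖ = 1) (hb : ‖b‖ ≤ 1) :
    |homog o a + homog o b - 2 * homog o ((1 / 2 : ℝ) • (a + b))| ≤ 4 := by
  have h1 := hd a b ha.le hb
  have h2 := homog_dist o ho hc hd b hb
  have h3 := homog_dist o ho hc hd ((1 / 2 : ℝ) • (a + b)) (by
    rw [norm_smul]; have := norm_add_le a b; norm_num; linarith)
  rw [homog_unit o a ha]
  rw [abs_le] at *
  constructor <;> linarith [h1.1, h1.2, h2.1, h2.2, h3.1, h3.2]

lemma homog_diff_le [FiniteDimensional ℝ X] (o : X → ℝ) (ho : ∀ x, o (-x) = -o x)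
    (hc : ContinuousOn o (Metric.closedBall 0 1))
    (hd : ∀ a b : X, ‖a‖ ≤ 1 → ‖b‖ ≤ 1 → |o a + o b - 2 * o ((1 / 2 : ℝ) • (a + b))| ≤ 1)
    (a b : X) (ha : ‖a‖ ≤ 1) (hb : ‖b‖ ≤ ‖a‖) :
    |homog o a + homog o b - 2 * homog o ((1 / 2 : ℝ) • (a + b))| ≤ 4 := by
  by_cases ha0 : a = 0
  · subst ha0
    have : b = 0 := by simpa using hb
    subst this
    simp [homog]
  have hap : 0 < ‖a‖ := norm_pos_iff.2 ha0
  have h := homog_diff_unit o ho hc hd (‖a‖⁻¹ • a) (‖a‖⁻¹ • b)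
    (by rw [norm_smul, norm_inv, norm_norm, inv_mul_cancel₀ hap.ne'])
    (by rw [norm_smul, norm_inv, norm_norm, inv_mul_le_one₀ hap]; exact hb)
  rw [← smul_add, smul_comm, homog_smul o ho, homog_smul o ho, homog_smul o ho,
    show ∀ r p q s : ℝ, r * p + r * q - 2 * (r * s) = r * (p + q - 2 * s) by intros; ring,
    abs_mul, abs_inv, abs_norm, inv_mul_le_iff₀ hap] at h
  linarith

lemma homog_diff [FiniteDimensional ℝ X] (o : X → ℝ) (ho : ∀ x, o (-x) = -o x)
    (hc : ContinuousOn o (Metric.closedBall 0 1))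
    (hd : ∀ a b : X, ‖a‖ ≤ 1 → ‖b‖ ≤ 1 → |o a + o b - 2 * o ((1 / 2 : ℝ) • (a + b))| ≤ 1)
    (a b : X) (ha : ‖a‖ ≤ 1) (hb : ‖b‖ ≤ 1) :
    |homog o a + homog o b - 2 * homog o ((1 / 2 : ℝ) • (a + b))| ≤ 4 := by
  rcases le_total ‖b‖ ‖a‖ with h | h
  · exact homog_diff_le o ho hc hd a b ha h
  · rw [add_comm a b, add_comm (homog o a)]
    exact homog_diff_le o ho hc hd b a hb h

end

/-- Proposition 2.2: `v₂(X) ≤ w₂(X) ≤ 4 v₂(X) + 3/2`. -/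
theorem homogeneous_whitney_comparison (X : Type*) [NormedAddCommGroup X] [NormedSpace ℝ X]
    [FiniteDimensional ℝ X] :
    -- (i) if `w₂(X) ≤ w` then `v₂(X) ≤ w`
    ((∀ w : ℝ, 0 ≤ w →
      (∀ f : X → ℝ, ContinuousOn f (Metric.closedBall 0 1) →
        diffBound 2 (Metric.closedBall 0 1) f 1 →
        ∃ (c : ℝ) (g : X →ₗ[ℝ] ℝ), ∀ x ∈ Metric.closedBall (0 : X) 1, |f x - (c + g x)| ≤ w) →
      (∀ f : X → ℝ, Continuous f → (∀ (a : ℝ) (x : X), f (a • x) = a * f x) →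
        diffBound 2 (Metric.closedBall 0 1) f 1 →
        ∃ g : X →ₗ[ℝ] ℝ, ∀ x ∈ Metric.closedBall (0 : X) 1, |f x - g x| ≤ w)) ∧
    -- (ii) if `v₂(X) ≤ v` then `w₂(X) ≤ 4v + 3/2`
    (∀ v : ℝ, 0 ≤ v →
      (∀ f : X → ℝ, Continuous f → (∀ (a : ℝ) (x : X), f (a • x) = a * f x) →
        diffBound 2 (Metric.closedBall 0 1) f 1 →
        ∃ g : X →ₗ[ℝ] ℝ, ∀ x ∈ Metric.closedBall (0 : X) 1, |f x - g x| ≤ v) →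
      (∀ f : X → ℝ, ContinuousOn f (Metric.closedBall 0 1) →
        diffBound 2 (Metric.closedBall 0 1) f 1 →
        ∃ (c : ℝ) (g : X →ₗ[ℝ] ℝ), ∀ x ∈ Metric.closedBall (0 : X) 1,
          |f x - (c + g x)| ≤ 4 * v + 3 / 2))) := by
  refine ⟨?_, ?_⟩
  · intro w _ H f hf hh hd
    obtain ⟨c, g, hg⟩ := H f hf.continuousOn hd
    refine ⟨g, fun x hx => ?_⟩
    have h1 := hg x hx
    have h2 := hg (-x) (by simpa using hx)
    have h3 : f (-x) = -f x := by simpa using hh (-1) x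
    rw [h3, map_neg] at h2
    rw [abs_le] at *
    constructor <;> linarith [h1.1, h1.2, h2.1, h2.2]
  · intro v _ H f hf hd
    rw [diffBound_two_iff] at hd
    set o : X → ℝ := fun x => (f x - f (-x)) / 2 with ho_def
    have ho : ∀ x, o (-x) = -o x := by
      intro x; simp only [ho_def, neg_neg]; ring
    have hc : ContinuousOn o (Metric.closedBall 0 1) := by
      refine (hf.sub (hf.comp continuous_neg.continuousOn ?_)).div_const 2
      intro x hx; simpa using hx
    have hod : ∀ a b : X, ‖a‖ ≤ 1 → ‖b‖ ≤ 1 →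
        |o a + o b - 2 * o ((1 / 2 : ℝ) • (a + b))| ≤ 1 := by
      intro a b ha hb
      have h1 := hd a b ha hb
      have h2 := hd (-a) (-b) (by simpa using ha) (by simpa using hb)
      rw [← neg_add, smul_neg] at h2
      simp only [ho_def]
      rw [abs_le] at *
      constructor <;> linarith [h1.1, h1.2, h2.1, h2.2]
    obtain ⟨g, hg⟩ := H (fun x => homog o x / 4) ((homog_continuous o hc).div_const 4)
      (by intro a x; simp only [homog_smul o ho]; ring)
      (by
        rw [diffBound_two_iff]
        intro a b ha hb
        have h := homog_diff o ho hc hod a b ha hb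
        rw [abs_le] at *
        constructor <;> linarith [h.1, h.2])
    refine ⟨f 0, (4 : ℝ) • g, fun x hx => ?_⟩
    have h1 := hg x hx
    rw [mem_closedBall_zero_iff] at hx
    have h2 := homog_dist o ho hc hod x hx
    have h3 := hd x (-x) hx (by simpa using hx)
    rw [add_neg_cancel, smul_zero] at h3
    simp only [ho_def] at h2
    simp only [LinearMap.smul_apply, smul_eq_mul]
    simp only [ho_def] at h1
    rw [abs_le] at *
    constructor <;> linarith [h1.1, h1.2, h2.1, h2.2, h3.1, h3.2]
end

section
/- Let K be a nonempty compact subset of ℝⁿ and f : K → ℝ continuous. Define E₂(f;K) := inf over affine functions φ on ℝⁿ of sup_{x∈K}|f(x)−φ(x)|. Then E₂(f;K) = (1/2)·sup{∑_{i=1}^l a_i f(x_i) − ∑_{j=1}^m b_j f(y_j)}, where the supremum is taken over all pairs of positive integers l, m with l + m ≤ n + 2, all points x₁,…,x_l, y₁,…,y_m ∈ K, and all nonnegative reals a₁,…,a_l, b₁,…,b_m with ∑_{i=1}^l a_i = ∑_{j=1}^m b_j = 1 and ∑_{i=1}^l a_i x_i = ∑_{j=1}^m b_j y_j. (Proposition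 3.2.) -/
open Finset

/-- One step / induction of the support reduction (basic feasible solutions). -/
lemma support_reduction {ι V : Type*} [DecidableEq ι] [AddCommGroup V] [Module ℝ V]
    [FiniteDimensional ℝ V] (u : ι → V) (L : V →ₗ[ℝ] ℝ) (hL : ∀ i, 0 < L (u i)) (g : ι → ℝ)
    (k : ℕ) : ∀ (s : Finset ι) (w : ι → ℝ), s.card = k → (∀ i ∈ s, 0 ≤ w i) →
    ∃ (s' : Finset ι) (w' : ι → ℝ), s'.card ≤ Module.finrank ℝ V ∧ (∀ i ∈ s', 0 ≤ w' i) ∧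
      ∑ i ∈ s', w' i • u i = ∑ i ∈ s, w i • u i ∧
      ∑ i ∈ s, w i * g i ≤ ∑ i ∈ s', w' i * g i := by
  induction k with
  | zero =>
    intro s w hs hw
    exact ⟨s, w, by omega, hw, rfl, le_rfl⟩
  | succ k ih =>
    intro s w hs hw
    by_cases hc : s.card ≤ Module.finrank ℝ V
    · exact ⟨s, w, hc, hw, rfl, le_rfl⟩
    have hdep : ∃ d : ι → ℝ, ∑ i ∈ s, d i • u i = 0 ∧ ∃ i ∈ s, d i ≠ 0 := by
      have h1 : ¬ LinearIndepOn ℝ u (s : Set ι) := by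
        intro h
        have h2 := LinearIndependent.fintype_card_le_finrank h
        simp at h2
        omega
      rw [linearIndepOn_finset_iff] at h1
      push Not at h1
      exact h1
    have hdep2 : ∃ d : ι → ℝ, ∑ i ∈ s, d i • u i = 0 ∧ (∃ i ∈ s, d i ≠ 0) ∧
        0 ≤ ∑ i ∈ s, d i * g i := by
      obtain ⟨d, hd, i, hi, hdi⟩ := hdep
      rcases le_total 0 (∑ i ∈ s, d i * g i) with h | h
      · exact ⟨d, hd, ⟨i, hi, hdi⟩, h⟩
      · refine ⟨fun i => - d i, ?_, ⟨i, hi, by simpa using hdi⟩, ?_⟩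
        · simp [neg_smul, Finset.sum_neg_distrib, hd]
        · simp [neg_mul, Finset.sum_neg_distrib, h]
    obtain ⟨d, hd, ⟨i1, hi1, hdi1⟩, hdg⟩ := hdep2
    have hneg : ∃ i ∈ s, d i < 0 := by
      by_contra hcon
      push Not at hcon
      have h0 : ∑ i ∈ s, d i * L (u i) = 0 := by
        have := congrArg L hd
        simpa [map_sum] using this
      have h1 := (Finset.sum_eq_zero_iff_of_nonneg
        (fun i hi => mul_nonneg (hcon i hi) (hL i).le)).1 h0 i1 hi1
      rcases mul_eq_zero.1 h1 with h | h
      · exact hdi1 h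
      · exact (hL i1).ne' h
    obtain ⟨i0, hi0, hmin⟩ := Finset.exists_min_image (s.filter fun i => d i < 0)
      (fun i => w i / (- d i)) (by
        obtain ⟨i, hi, h⟩ := hneg
        exact ⟨i, by simp [hi, h]⟩)
    simp only [Finset.mem_filter] at hi0 hmin
    obtain ⟨hi0s, hd0⟩ := hi0
    set τ := w i0 / (- d i0) with hτ
    have hτ0 : 0 ≤ τ := div_nonneg (hw i0 hi0s) (by linarith)
    have hz : w i0 + τ * d i0 = 0 := by
      rw [hτ, div_neg, neg_mul, div_mul_cancel₀ _ hd0.ne, add_neg_cancel]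
    have hnn : ∀ i ∈ s, 0 ≤ w i + τ * d i := by
      intro i hi
      rcases lt_or_ge (d i) 0 with h | h
      · have h1 := hmin i ⟨hi, h⟩
        rw [le_div_iff₀ (by linarith)] at h1
        linarith
      · have := hw i hi
        positivity
    obtain ⟨s', w', h1, h2, h3, h4⟩ := ih (s.erase i0) (fun i => w i + τ * d i)
      (by rw [Finset.card_erase_of_mem hi0s]; omega)
      (fun i hi => hnn i (Finset.mem_of_mem_erase hi))
    refine ⟨s', w', h1, h2, ?_, ?_⟩
    · rw [h3, Finset.sum_erase _ (by simp [hz])]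
      simp only [add_smul, Finset.sum_add_distrib, mul_smul, ← Finset.smul_sum, hd]
      simp
    · refine le_trans ?_ h4
      rw [Finset.sum_erase _ (by simp [hz])]
      simp only [add_mul, Finset.sum_add_distrib, mul_assoc, ← Finset.mul_sum]
      nlinarith

/-- The convex hull of a compact set in finite dimension is compact. -/
lemma isCompact_convexHull_aux {E : Type*} [NormedAddCommGroup E] [NormedSpace ℝ E]
    [FiniteDimensional ℝ E] {P : Set E} (hP : IsCompact P) : IsCompact (convexHull ℝ P) := by
  have heq : convexHull ℝ P = ⋃ k ∈ Set.Iic (Module.finrank ℝ E + 1),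
      (fun q : (Fin k → ℝ) × (Fin k → E) => ∑ i, q.1 i • q.2 i) ''
        (stdSimplex ℝ (Fin k) ×ˢ Set.pi Set.univ fun _ => P) := by
    apply Set.Subset.antisymm
    · intro x hx
      obtain ⟨ι, _, z, w, hz, haff, hw, hw1, hx⟩ := eq_pos_convex_span_of_mem_convexHull hx
      have hcard : Fintype.card ι ≤ Module.finrank ℝ E + 1 :=
        haff.card_le_finrank_succ.trans (Nat.succ_le_succ (Submodule.finrank_le _))
      let e := (Fintype.equivFin ι).symm
      simp only [Set.mem_iUnion]
      refine ⟨Fintype.card ι, hcard, (fun i => w (e i), fun i => z (e i)),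
        ⟨⟨fun i => (hw _).le, ?_⟩, fun i _ => hz ⟨_, rfl⟩⟩, ?_⟩
      · rw [← hw1]
        exact Equiv.sum_comp e w
      · rw [← hx]
        exact Equiv.sum_comp e (fun i => w i • z i)
    · simp only [Set.iUnion_subset_iff]
      rintro k - x ⟨⟨w, z⟩, ⟨hw, hz⟩, rfl⟩
      exact (convex_convexHull ℝ P).sum_mem (fun i _ => hw.1 i) hw.2
        (fun i _ => subset_convexHull ℝ P (hz i trivial))
  rw [heq]
  refine (Set.finite_Iic _).isCompact_biUnion fun k _ => ?_
  refine ((isCompact_stdSimplex ℝ (Fin k)).prod (isCompact_univ_pi fun _ => hP)).image ?_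
  fun_prop

/-- Proposition 3.2: a duality formula for the best affine approximation on a compact set. -/
theorem best_affine_approx_duality (n : ℕ) (K : Set (Fin n → ℝ)) (hne : K.Nonempty)
    (hK : IsCompact K) (f : (Fin n → ℝ) → ℝ) (hf : ContinuousOn f K) :
    sInf {r : ℝ | ∃ (c : ℝ) (a : Fin n → ℝ), ∀ x ∈ K, |f x - (c + ∑ i, a i * x i)| ≤ r} =
      (1 / 2) * sSup {v : ℝ | ∃ (l m : ℕ) (x : Fin l → Fin n → ℝ) (y : Fin m → Fin n → ℝ)
        (a : Fin l → ℝ) (b : Fin m → ℝ),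
        1 ≤ l ∧ 1 ≤ m ∧ l + m ≤ n + 2 ∧
        (∀ i, x i ∈ K) ∧ (∀ j, y j ∈ K) ∧ (∀ i, 0 ≤ a i) ∧ (∀ j, 0 ≤ b j) ∧
        (∑ i, a i) = 1 ∧ (∑ j, b j) = 1 ∧ (∑ i, a i • x i) = (∑ j, b j • y j) ∧
        v = (∑ i, a i * f (x i)) - (∑ j, b j * f (y j))} := by
  set R := {r : ℝ | ∃ (c : ℝ) (a : Fin n → ℝ), ∀ x ∈ K, |f x - (c + ∑ i, a i * x i)| ≤ r}
    with hR
  set W := {v : ℝ | ∃ (l m : ℕ) (x : Fin l → Fin n → ℝ) (y : Fin m → Fin n → ℝ)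
        (a : Fin l → ℝ) (b : Fin m → ℝ),
        1 ≤ l ∧ 1 ≤ m ∧ l + m ≤ n + 2 ∧
        (∀ i, x i ∈ K) ∧ (∀ j, y j ∈ K) ∧ (∀ i, 0 ≤ a i) ∧ (∀ j, 0 ≤ b j) ∧
        (∑ i, a i) = 1 ∧ (∑ j, b j) = 1 ∧ (∑ i, a i • x i) = (∑ j, b j • y j) ∧
        v = (∑ i, a i * f (x i)) - (∑ j, b j * f (y j))} with hW
  obtain ⟨p, hp⟩ := hne
  -- weak duality
  have hweak : ∀ v ∈ W, ∀ r ∈ R, v ≤ 2 * r := by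
    rintro v ⟨l, m, x, y, a, b, hl, hm, hlm, hx, hy, ha, hb, hsa, hsb, hxy, rfl⟩ r ⟨c, α, h⟩
    let φ : (Fin n → ℝ) →ₗ[ℝ] ℝ := ∑ i, α i • LinearMap.proj i
    have hφ : ∀ z, φ z = ∑ i, α i * z i := by
      intro z; simp [φ]
    simp only [← hφ] at h
    have h1 : ∑ i, a i * f (x i) ≤ ∑ i, a i * (r + c + φ (x i)) :=
      Finset.sum_le_sum fun i _ => mul_le_mul_of_nonneg_left
        (by linarith [(abs_le.1 (h _ (hx i))).2]) (ha i)
    have h2 : ∑ i, b i * (- r + c + φ (y i)) ≤ ∑ i, b i * f (y i) :=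
      Finset.sum_le_sum fun i _ => mul_le_mul_of_nonneg_left
        (by linarith [(abs_le.1 (h _ (hy i))).1]) (hb i)
    have h3 := congrArg φ hxy
    simp only [map_sum, map_smul, smul_eq_mul] at h3
    simp only [mul_add, Finset.sum_add_distrib, ← Finset.sum_mul, hsa, hsb] at h1 h2
    linarith
  have hR0 : ∀ r ∈ R, 0 ≤ r := by
    rintro r ⟨c, a, h⟩
    exact le_trans (abs_nonneg _) (h p hp)
  have hRbdd : BddBelow R := ⟨0, fun r hr => hR0 r hr⟩
  have hRne : R.Nonempty := by
    obtain ⟨C, hC⟩ := hK.exists_bound_of_continuousOn hf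
    exact ⟨C, 0, 0, fun x hx => by simpa using hC x hx⟩
  have hW0 : (0 : ℝ) ∈ W :=
    ⟨1, 1, fun _ => p, fun _ => p, fun _ => 1, fun _ => 1, le_rfl, le_rfl, by omega,
      fun _ => hp, fun _ => hp, by simp, by simp, by simp, by simp, by simp, by simp⟩
  have hWbdd : BddAbove W := by
    obtain ⟨r, hr⟩ := hRne
    exact ⟨2 * r, fun v hv => hweak v hv r hr⟩
  have hS0 : 0 ≤ sSup W := le_csSup hWbdd hW0
  apply le_antisymm
  · refine le_of_forall_gt_imp_ge_of_dense fun q hq => ?_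
    obtain ⟨t, ht⟩ : ∃ t, t = 2 * q := ⟨_, rfl⟩
    have htS : sSup W < t := by linarith
    let P : Set ((Fin n → ℝ) × ℝ) :=
      (fun z : (Fin n → ℝ) × (Fin n → ℝ) => (z.1 - z.2, f z.1 - f z.2)) '' (K ×ˢ K)
    have hPc : IsCompact P := by
      refine (hK.prod hK).image_of_continuousOn ?_
      have hf1 : ContinuousOn (fun z : (Fin n → ℝ) × (Fin n → ℝ) => f z.1) (K ×ˢ K) :=
        hf.comp continuousOn_fst (fun z hz => hz.1)
      have hf2 : ContinuousOn (fun z : (Fin n → ℝ) × (Fin n → ℝ) => f z.2) (K ×ˢ K) :=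
        hf.comp continuousOn_snd (fun z hz => hz.2)
      exact (continuousOn_fst.sub continuousOn_snd).prodMk (hf1.sub hf2)
    have hnot : ((0 : Fin n → ℝ), t) ∉ convexHull ℝ P := by
      intro hmem
      rw [mem_convexHull_iff_exists_fintype] at hmem
      obtain ⟨ι, _, w, z, hw0, hw1, hz, hsum⟩ := hmem
      classical
      choose xy hxyK hxyz using hz
      let u : ι ⊕ ι → ℝ × ℝ × (Fin n → ℝ) :=
        Sum.elim (fun i => (1, 0, (xy i).1)) (fun i => (0, 1, -(xy i).2))
      let g : ι ⊕ ι → ℝ := Sum.elim (fun i => f (xy i).1) (fun i => - f (xy i).2)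
      let L : ℝ × ℝ × (Fin n → ℝ) →ₗ[ℝ] ℝ :=
        LinearMap.fst ℝ _ _ + LinearMap.fst ℝ _ _ ∘ₗ LinearMap.snd ℝ _ _
      obtain ⟨s', w', hcard, hw', hs', hle⟩ := support_reduction u L
        (by rintro (i | i) <;> simp [u, L]) g _ Finset.univ (Sum.elim w w) rfl
        (by rintro (i | i) _ <;> simp [hw0])
      have hfr : Module.finrank ℝ (ℝ × ℝ × (Fin n → ℝ)) = n + 2 := by
        simp; omega
      rw [hfr] at hcard
      simp only [← hxyz] at hsum
      have hsum1 := congrArg Prod.fst hsum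
      have hsum2 := congrArg Prod.snd hsum
      simp only [Prod.fst_sum, Prod.snd_sum, Prod.smul_fst, Prod.smul_snd, smul_eq_mul]
        at hsum1 hsum2
      simp only [Fintype.sum_sum_type, Sum.elim_inl, Sum.elim_inr, u, g] at hs' hle
      rw [← Finset.toLeft_disjSum_toRight (u := s')] at hs' hle hcard hw'
      simp only [Finset.sum_disjSum, Finset.card_disjSum, Sum.elim_inl, Sum.elim_inr]
        at hs' hle hcard
      generalize s'.toLeft = A at *
      generalize s'.toRight = B at *
      have e1 := congrArg Prod.fst hs'
      have e2 := congrArg (fun q => q.2.1) hs'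
      have e3 := congrArg (fun q => q.2.2) hs'
      simp [Prod.fst_sum, Prod.snd_sum, hw1] at e1 e2 e3
      have hv : (∑ i ∈ A, w' (Sum.inl i) * f (xy i).1) - ∑ i ∈ B, w' (Sum.inr i) * f (xy i).2
          ∈ W := by
        have tr : ∀ {E : Type} [AddCommMonoid E] (A : Finset ι) (F : ι → E),
            ∑ i : Fin A.card, F (A.equivFin.symm i) = ∑ i ∈ A, F i := by
          intro E _ A F
          rw [Equiv.sum_comp A.equivFin.symm (fun i : A => F i), Finset.sum_coe_sort]
        refine ⟨A.card, B.card, fun i => (xy (A.equivFin.symm i)).1,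
          fun i => (xy (B.equivFin.symm i)).2, fun i => w' (Sum.inl (A.equivFin.symm i)),
          fun i => w' (Sum.inr (B.equivFin.symm i)), ?_, ?_, hcard, fun i => (hxyK _).1,
          fun i => (hxyK _).2, ?_, ?_, ?_, ?_, ?_, ?_⟩
        · rw [Nat.one_le_iff_ne_zero, Finset.card_ne_zero, Finset.nonempty_iff_ne_empty]
          rintro rfl
          simp at e1
        · rw [Nat.one_le_iff_ne_zero, Finset.card_ne_zero, Finset.nonempty_iff_ne_empty]
          rintro rfl
          simp at e2
        · intro i
          exact hw' _ (by simp)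
        · intro i
          exact hw' _ (by simp)
        · rw [tr A (fun i => w' (Sum.inl i)), e1]
        · rw [tr B (fun i => w' (Sum.inr i)), e2]
        · rw [tr A (fun i => w' (Sum.inl i) • (xy i).1), tr B (fun i => w' (Sum.inr i) • (xy i).2)]
          simp only [smul_sub, Finset.sum_sub_distrib] at hsum1
          rw [← sub_eq_zero, sub_eq_add_neg, e3, ← sub_eq_add_neg, hsum1]
        · rw [tr A (fun i => w' (Sum.inl i) * f (xy i).1),
            tr B (fun i => w' (Sum.inr i) * f (xy i).2)]
      have h1 := le_csSup hWbdd hv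
      simp only [mul_sub, Finset.sum_sub_distrib] at hsum2
      simp only [mul_neg, Finset.sum_neg_distrib] at hle
      linarith
    obtain ⟨F, c0, hF1, hF2⟩ := geometric_hahn_banach_closed_point (convex_convexHull ℝ P)
      (isCompact_convexHull_aux hPc).isClosed hnot
    have hFf : ∀ (z : Fin n → ℝ) (τ : ℝ),
        F (z, τ) = (∑ i, F (Pi.single i 1, 0) * z i) + F (0, 1) * τ := by
      intro z τ
      have h1 : (z, τ) = (∑ i, z i • ((Pi.single i 1 : Fin n → ℝ), (0 : ℝ)))
          + τ • ((0 : Fin n → ℝ), (1 : ℝ)) := by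
        ext j
        · simp [Prod.fst_sum, Finset.sum_apply, Pi.single_apply]
        · simp [Prod.snd_sum]
      rw [h1, map_add, map_sum]
      simp only [map_smul, smul_eq_mul, mul_comm]
    set β := F (0, 1) with hβ
    set α : Fin n → ℝ := fun i => F (Pi.single i 1, 0) with hα
    have hFt : F (0, t) = β * t := by rw [hFf]; simp
    rw [hFt] at hF2
    have hPP : ∀ x ∈ K, ∀ y ∈ K, (∑ i, α i * (x i - y i)) + β * (f x - f y) < β * t := by
      intro x hx y hy
      have := hF1 (x - y, f x - f y) (subset_convexHull ℝ P ⟨(x, y), ⟨hx, hy⟩, rfl⟩)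
      rw [hFf] at this
      exact lt_trans this hF2
    have hβt : 0 < β * t := by simpa using hPP p hp p hp
    have htpos : 0 < t := by linarith
    have hβpos : 0 < β := by
      by_contra hcon
      nlinarith
    let h : (Fin n → ℝ) → ℝ := fun x => f x + (∑ i, α i * x i) / β
    have hh : ContinuousOn h K := by
      refine hf.add (Continuous.continuousOn ?_)
      fun_prop
    have hosc : ∀ x ∈ K, ∀ y ∈ K, h x - h y < t := by
      intro x hx y hy
      have h1 := hPP x hx y hy
      simp only [mul_sub, Finset.sum_sub_distrib] at h1
      have h2 : β * (h x - h y) < β * t := by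
        simp only [h]
        field_simp
        linarith
      exact lt_of_mul_lt_mul_left h2 hβpos.le
    obtain ⟨x1, hx1, hmax⟩ := hK.exists_isMaxOn ⟨p, hp⟩ hh
    obtain ⟨y1, hy1, hmin⟩ := hK.exists_isMinOn ⟨p, hp⟩ hh
    refine csInf_le hRbdd ⟨(h x1 + h y1) / 2, fun i => - (α i / β), fun x hx => ?_⟩
    have h1 : h x ≤ h x1 := hmax hx
    have h2 : h y1 ≤ h x := hmin hx
    have h3 := hosc x1 hx1 y1 hy1
    have h4 : f x - ((h x1 + h y1) / 2 + ∑ i, -(α i / β) * x i) = h x - (h x1 + h y1) / 2 := by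
      have : ∑ i, -(α i / β) * x i = - ((∑ i, α i * x i) / β) := by
        rw [Finset.sum_div, ← Finset.sum_neg_distrib]
        exact Finset.sum_congr rfl fun i _ => by ring
      rw [this]
      simp only [h]
      ring
    rw [h4, abs_le]
    constructor <;> linarith
  · refine le_csInf hRne fun r hr => ?_
    have := csSup_le ⟨0, hW0⟩ (fun v hv => hweak v hv r hr)
    linarith
end

section
/- Let m ≥ 1 and β ≥ 0. Denote by S^k the simplex co{e₁,…,e_{k+1}} ⊂ ℝ^{k+1}, and for a function f on a convex set K let δ_k(f;K) := sup{|f(∑_{i=1}^k a_i x_i) − ∑_{i=1}^k a_i f(x_i)|} over all x₁,…,x_k ∈ K and a₁,…,a_k ≥ 0 with ∑ a_i = 1. If every continuous f : S^m → ℝ with ω₂(f;S^m) ≤ 1 satisfies δ_{m+1}(f;S^m) ≤ β, then every continuous f : S^{2m} → ℝ with ω₂(f;S^{2m}) ≤ 1 satisfies δ_{2m+1}(f;S^{2m}) ≤ β + 1/2. (Lemma 3.4: β_{2m} ≤ β_m + 1/2.) -/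
open Finset

/-- `deltaBound k K f β` says `δ_k(f;K) ≤ β`: for all convex combinations of `k` points of `K`,
`|f(∑ aᵢ xᵢ) − ∑ aᵢ f(xᵢ)| ≤ β`. -/
def deltaBound {E : Type*} [AddCommGroup E] [Module ℝ E] (k : ℕ) (K : Set E) (f : E → ℝ)
    (β : ℝ) : Prop :=
  ∀ (x : Fin k → E) (a : Fin k → ℝ), (∀ i, x i ∈ K) → (∀ i, 0 ≤ a i) → (∑ i, a i) = 1 →
    |f (∑ i, a i • x i) - ∑ i, a i * f (x i)| ≤ β

/-- Pull back along an affine map: the hypothesis for `m` gives the estimate for convex combinations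
of `m+1` points in any convex set. -/
lemma pullback_delta (m n : ℕ) (β : ℝ)
    (H : ∀ f : (Fin (m + 1) → ℝ) → ℝ, ContinuousOn f (stdSimplex ℝ (Fin (m + 1))) →
      diffBound 2 (stdSimplex ℝ (Fin (m + 1))) f 1 →
      deltaBound (m + 1) (stdSimplex ℝ (Fin (m + 1))) f β)
    (f : (Fin n → ℝ) → ℝ) (hf : ContinuousOn f (stdSimplex ℝ (Fin n)))
    (hd : diffBound 2 (stdSimplex ℝ (Fin n)) f 1) :
    deltaBound (m + 1) (stdSimplex ℝ (Fin n)) f β := by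
  intro x a hx ha hs
  let L : (Fin (m + 1) → ℝ) → (Fin n → ℝ) := fun s => ∑ i, s i • x i
  have hL : ∀ s ∈ stdSimplex ℝ (Fin (m + 1)), L s ∈ stdSimplex ℝ (Fin n) := fun s hs =>
    (convex_stdSimplex ℝ (Fin n)).sum_mem (fun i _ => hs.1 i) hs.2 (fun i _ => hx i)
  have hLc : Continuous L := by fun_prop
  have hLa : ∀ (s h : Fin (m + 1) → ℝ) (c : ℝ), L (s + c • h) = L s + c • L h := by
    intro s h c
    simp only [L, Pi.add_apply, Pi.smul_apply, add_smul, Finset.sum_add_distrib, smul_assoc,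
      Finset.smul_sum]
  have key := H (f ∘ L) (hf.comp hLc.continuousOn hL) (by
    intro s h hsh
    have := hd (L s) (L h) (fun j hj => by rw [← hLa]; exact hL _ (hsh j hj))
    simpa only [Function.comp, hLa] using this)
    (fun i => Pi.single i 1) a (fun i => single_mem_stdSimplex ℝ i) ha hs
  have e1 : ∑ i, a i • (Pi.single i 1 : Fin (m + 1) → ℝ) = a := by
    ext j
    simp [Finset.sum_apply, Pi.single_apply]
  have e2 : ∀ i, L (Pi.single i 1) = x i := by
    intro i
    simp [L, Pi.single_apply]
  rw [e1] at key
  simpa only [Function.comp, e2] using key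

lemma sum_range_split {M : Type*} [AddCommMonoid M] (m : ℕ) (F : ℕ → M) :
    ∑ i ∈ Finset.range (2 * m + 1), F i =
      ((∑ i ∈ Finset.range m, F (2 * i)) + ∑ i ∈ Finset.range m, F (2 * i + 1)) + F (2 * m) := by
  induction m with
  | zero => simp
  | succ k ih =>
    rw [show 2 * (k + 1) + 1 = 2 * k + 1 + 1 + 1 by ring, Finset.sum_range_succ,
      Finset.sum_range_succ, ih, Finset.sum_range_succ, Finset.sum_range_succ,
      show 2 * (k + 1) = 2 * k + 1 + 1 by ring]
    abel

lemma sum_fin_split {M : Type*} [AddCommMonoid M] (m : ℕ) (F : Fin (2 * m + 1) → M) :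
    ∑ i, F i = ((∑ i : Fin m, F ⟨2 * i, by omega⟩) + ∑ i : Fin m, F ⟨2 * i + 1, by omega⟩)
      + F ⟨2 * m, by omega⟩ := by
  have := sum_range_split m (fun n => if h : n < 2 * m + 1 then F ⟨n, h⟩ else 0)
  rw [Finset.sum_range, Finset.sum_range, Finset.sum_range] at this
  have h1 : ∀ i : Fin m, 2 * (i : ℕ) < 2 * m + 1 := fun i => by omega
  have h2 : ∀ i : Fin m, 2 * (i : ℕ) + 1 < 2 * m + 1 := fun i => by omega
  have h3 : ∀ i : Fin (2 * m + 1), (i : ℕ) < 2 * m + 1 := fun i => i.2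
  simpa only [h1, h2, h3, dite_true, Fin.eta, Nat.lt_succ_self] using this

/-- The core: midpoint decomposition. -/
lemma core_split (m n : ℕ) (β : ℝ) (f : (Fin n → ℝ) → ℝ)
    (hd : diffBound 2 (stdSimplex ℝ (Fin n)) f 1)
    (hD : deltaBound (m + 1) (stdSimplex ℝ (Fin n)) f β)
    (y z : Fin m → (Fin n → ℝ)) (w : Fin n → ℝ) (u v : Fin m → ℝ) (t : ℝ)
    (hy : ∀ i, y i ∈ stdSimplex ℝ (Fin n)) (hz : ∀ i, z i ∈ stdSimplex ℝ (Fin n))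
    (hw : w ∈ stdSimplex ℝ (Fin n)) (hu : ∀ i, 0 ≤ u i) (hv : ∀ i, 0 ≤ v i)
    (hs : (∑ i, u i) + (∑ i, v i) + t = 1) (hU : ∑ i, u i ≤ 1 / 2) (hV : ∑ i, v i ≤ 1 / 2) :
    |f ((∑ i, u i • y i) + (∑ i, v i • z i) + t • w) -
      ((∑ i, u i * f (y i)) + (∑ i, v i * f (z i)) + t * f w)| ≤ β + 1 / 2 := by
  have aux : ∀ (y : Fin m → (Fin n → ℝ)) (u : Fin m → ℝ)
      (_ : ∀ i, y i ∈ stdSimplex ℝ (Fin n)) (_ : ∀ i, 0 ≤ u i) (_ : ∑ i, u i ≤ 1 / 2),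
      ((2 : ℝ) • (∑ i, u i • y i) + (1 - 2 * ∑ i, u i) • w) ∈ stdSimplex ℝ (Fin n) ∧
      |f ((2 : ℝ) • (∑ i, u i • y i) + (1 - 2 * ∑ i, u i) • w) -
        (2 * (∑ i, u i * f (y i)) + (1 - 2 * ∑ i, u i) * f w)| ≤ β := by
    intro y u hy hu hU
    let X : Fin (m + 1) → (Fin n → ℝ) := Fin.snoc y w
    let A : Fin (m + 1) → ℝ := Fin.snoc (fun i => 2 * u i) (1 - 2 * ∑ i, u i)
    have hX : ∀ i, X i ∈ stdSimplex ℝ (Fin n) := by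
      intro i
      refine Fin.lastCases ?_ (fun j => ?_) i
      · simpa [X] using hw
      · simpa [X] using hy j
    have hA : ∀ i, 0 ≤ A i := by
      intro i
      refine Fin.lastCases ?_ (fun j => ?_) i
      · simp only [A, Fin.snoc_last]; linarith
      · simpa [A] using hu j
    have hsA : ∑ i, A i = 1 := by
      simp [Fin.sum_univ_castSucc, A, ← Finset.mul_sum]
    have e : ∑ i, A i • X i = (2 : ℝ) • (∑ i, u i • y i) + (1 - 2 * ∑ i, u i) • w := by
      simp only [Fin.sum_univ_castSucc, A, X, Fin.snoc_castSucc, Fin.snoc_last, Finset.smul_sum,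
        mul_smul]
    have e2 : ∑ i, A i * f (X i) = 2 * (∑ i, u i * f (y i)) + (1 - 2 * ∑ i, u i) * f w := by
      simp only [Fin.sum_univ_castSucc, A, X, Fin.snoc_castSucc, Fin.snoc_last, Finset.mul_sum,
        mul_assoc]
    have hm := (convex_stdSimplex ℝ (Fin n)).sum_mem (fun i _ => hA i) hsA (fun i _ => hX i)
    have hk := hD X A hX hA hsA
    rw [e] at hm hk
    rw [e2] at hk
    exact ⟨hm, hk⟩
  obtain ⟨p1, p2⟩ := aux y u hy hu hU
  obtain ⟨q1, q2⟩ := aux z v hz hv hV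
  set P := (2 : ℝ) • (∑ i, u i • y i) + (1 - 2 * ∑ i, u i) • w with hP
  set Q := (2 : ℝ) • (∑ i, v i • z i) + (1 - 2 * ∑ i, v i) • w with hQ
  set R := (∑ i, u i • y i) + (∑ i, v i • z i) + t • w with hR
  have ht : t = 1 - (∑ i, u i) - (∑ i, v i) := by linarith
  have eR : R = P + (1 / 2 : ℝ) • (Q - P) := by
    rw [hR, hP, hQ, ht]; module
  have c0 : P + ((0 : ℕ) : ℝ) • ((1 / 2 : ℝ) • (Q - P)) = P := by simp
  have c1 : P + ((1 : ℕ) : ℝ) • ((1 / 2 : ℝ) • (Q - P)) = R := by rw [eR]; simp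
  have c2 : P + ((2 : ℕ) : ℝ) • ((1 / 2 : ℝ) • (Q - P)) = Q := by push_cast; module
  have hRm : R ∈ stdSimplex ℝ (Fin n) := by
    have := (convex_stdSimplex ℝ (Fin n)) p1 q1 (by norm_num : (0 : ℝ) ≤ 1 / 2)
      (by norm_num : (0 : ℝ) ≤ 1 / 2) (by norm_num)
    convert this using 1
    rw [eR]; module
  have key := hd P ((1 / 2 : ℝ) • (Q - P)) (by
    intro j hj
    interval_cases j
    · rw [c0]; exact p1
    · rw [c1]; exact hRm
    · rw [c2]; exact q1)
  rw [Finset.sum_range_succ, Finset.sum_range_succ, Finset.sum_range_one, c0, c1, c2] at key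
  norm_num at key
  rw [abs_le] at *
  rw [ht]
  constructor <;> nlinarith [key.1, key.2, p2.1, p2.2, q2.1, q2.2]

/-- Lemma 3.4: `β_{2m} ≤ β_m + 1/2`. -/
theorem simplex_delta_doubling (m : ℕ) (hm : 1 ≤ m) (β : ℝ) (hβ : 0 ≤ β)
    (H : ∀ f : (Fin (m + 1) → ℝ) → ℝ, ContinuousOn f (stdSimplex ℝ (Fin (m + 1))) →
      diffBound 2 (stdSimplex ℝ (Fin (m + 1))) f 1 →
      deltaBound (m + 1) (stdSimplex ℝ (Fin (m + 1))) f β) :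
    ∀ f : (Fin (2 * m + 1) → ℝ) → ℝ, ContinuousOn f (stdSimplex ℝ (Fin (2 * m + 1))) →
      diffBound 2 (stdSimplex ℝ (Fin (2 * m + 1))) f 1 →
      deltaBound (2 * m + 1) (stdSimplex ℝ (Fin (2 * m + 1))) f (β + 1 / 2) := by
  intro f hf hd x' a' hx' ha' hs'
  have hD := pullback_delta m (2 * m + 1) β H f hf hd
  -- sort the weights
  let σ := Tuple.sort a'
  have hmono : Monotone (a' ∘ σ) := Tuple.monotone_sort a'
  obtain ⟨a, hadef⟩ : ∃ a, a = a' ∘ σ := ⟨_, rfl⟩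
  obtain ⟨x, hxdef⟩ : ∃ x, x = x' ∘ σ := ⟨_, rfl⟩
  rw [← hadef] at hmono
  have ha : ∀ i, 0 ≤ a i := fun i => by rw [hadef]; exact ha' _
  have hx : ∀ i, x i ∈ stdSimplex ℝ (Fin (2 * m + 1)) := fun i => by rw [hxdef]; exact hx' _
  have s1 : ∑ i, a' i = ∑ i, a i := by
    rw [hadef]; exact (Equiv.sum_comp σ a').symm
  have s2 : ∑ i, a' i • x' i = ∑ i, a i • x i := by
    rw [hadef, hxdef]; exact (Equiv.sum_comp σ (fun i => a' i • x' i)).symm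
  have s3 : ∑ i, a' i * f (x' i) = ∑ i, a i * f (x i) := by
    rw [hadef, hxdef]; exact (Equiv.sum_comp σ (fun i => a' i * f (x' i))).symm
  rw [s2, s3]
  rw [s1] at hs'
  have hs := hs'
  rw [sum_fin_split] at hs
  rw [sum_fin_split m (fun i => a i • x i), sum_fin_split m (fun i => a i * f (x i))]
  have hBA : ∑ i : Fin m, a ⟨2 * i, by omega⟩ ≤ ∑ i : Fin m, a ⟨2 * i + 1, by omega⟩ :=
    Finset.sum_le_sum fun i _ => hmono (by simp [Fin.le_def])
  have hAB : ∑ i : Fin m, a ⟨2 * i + 1, by omega⟩ ≤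
      (∑ i : Fin m, a ⟨2 * i, by omega⟩) + a ⟨2 * m, by omega⟩ := by
    have e : (∑ i : Fin m, a ⟨2 * i, by omega⟩) + a ⟨2 * m, by omega⟩ =
        a ⟨0, by omega⟩ + ∑ i : Fin m, a ⟨2 * (i + 1), by omega⟩ := by
      have h1 := Fin.sum_univ_castSucc (fun i : Fin (m + 1) => a ⟨2 * i, by omega⟩)
      have h2 := Fin.sum_univ_succ (fun i : Fin (m + 1) => a ⟨2 * i, by omega⟩)
      simp only [Fin.val_castSucc, Fin.val_last, Fin.val_succ, Fin.val_zero, mul_zero] at h1 h2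
      rw [← h1, h2]
    rw [e]
    have : ∑ i : Fin m, a ⟨2 * i + 1, by omega⟩ ≤ ∑ i : Fin m, a ⟨2 * (i + 1), by omega⟩ :=
      Finset.sum_le_sum fun i _ => hmono (by simp only [Fin.le_def]; omega)
    linarith [ha ⟨0, by omega⟩]
  exact core_split m (2 * m + 1) β f hd hD _ _ _ _ _ _ (fun i => hx _) (fun i => hx _) (hx _)
    (fun i => ha _) (fun i => ha _) hs (by linarith) (by linarith)
end

section
/- Let K₁ ⊆ ℝ^{n₁} and K₂ ⊆ ℝ^{n₂} be nonempty closed bounded convex sets, and let f₁ : K₁ → ℝ, f₂ : K₂ → ℝ be continuous convex functions with ω₂(f₁;K₁) ≤ 1 and ω₂(f₂;K₂) ≤ 1. Define g : K₁ × K₂ → ℝ by g(x,y) = f₁(x) − f₂(y). Then (a) E₂(g;K₁×K₂) = E₂(f₁;K₁) + E₂(f₂;K₂), and (b) ω₂(g;K₁×K₂) ≤ 1. (Lemma 3.6.) -/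
open Finset

/-- Half the oscillation of `f` minus a linear form is attained as an approximation error. -/
lemma exists_osc {n : ℕ} {K : Set (Fin n → ℝ)} (hne : K.Nonempty) (hK : IsCompact K)
    {f : (Fin n → ℝ) → ℝ} (hf : ContinuousOn f K) (a : Fin n → ℝ) :
    ∃ p ∈ K, ∃ q ∈ K,
      ((f q - ∑ i, a i * q i) - (f p - ∑ i, a i * p i)) / 2 ∈
        {r : ℝ | ∃ (c : ℝ) (a : Fin n → ℝ), ∀ x ∈ K, |f x - (c + ∑ i, a i * x i)| ≤ r} := by
  have hF : ContinuousOn (fun x => f x - ∑ i, a i * x i) K :=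
    hf.sub (Continuous.continuousOn (by fun_prop))
  obtain ⟨p, hp, hpm⟩ := hK.exists_isMinOn hne hF
  obtain ⟨q, hq, hqm⟩ := hK.exists_isMaxOn hne hF
  refine ⟨p, hp, q, hq, ((f q - ∑ i, a i * q i) + (f p - ∑ i, a i * p i)) / 2, a, ?_⟩
  intro x hx
  have h1 := isMinOn_iff.1 hpm x hx
  have h2 := isMaxOn_iff.1 hqm x hx
  rw [abs_le]
  constructor <;> linarith

lemma diff_nonneg {n : ℕ} {K : Set (Fin n → ℝ)} {f : (Fin n → ℝ) → ℝ} (hf : ConvexOn ℝ K f)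
    (hω : diffBound 2 K f 1) (x h : Fin n → ℝ) (hx : ∀ j : ℕ, j ≤ 2 → x + (j : ℝ) • h ∈ K) :
    0 ≤ f x - 2 * f (x + h) + f (x + (2 : ℝ) • h) ∧
      f x - 2 * f (x + h) + f (x + (2 : ℝ) • h) ≤ 1 := by
  have h0 : x ∈ K := by simpa using hx 0 (by norm_num)
  have h2 : x + (2 : ℝ) • h ∈ K := by simpa using hx 2 le_rfl
  constructor
  · have := hf.2 h0 h2 (show (0 : ℝ) ≤ 1 / 2 by norm_num) (show (0 : ℝ) ≤ 1 / 2 by norm_num) (by norm_num)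
    have e : (1 / 2 : ℝ) • x + (1 / 2 : ℝ) • (x + (2 : ℝ) • h) = x + h := by module
    rw [e] at this
    simp only [smul_eq_mul] at this
    linarith
  · have := (abs_le.1 (hω x h hx)).2
    simp [Finset.sum_range_succ] at this
    linarith

/-- Lemma 3.6: for convex `f₁`, `f₂` with `ω₂ ≤ 1`, the function `g(x,y) = f₁(x) − f₂(y)`
satisfies `E₂(g;K₁×K₂) = E₂(f₁;K₁) + E₂(f₂;K₂)` and `ω₂(g;K₁×K₂) ≤ 1`. -/
theorem product_difference_of_convex (n₁ n₂ : ℕ)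
    (K₁ : Set (Fin n₁ → ℝ)) (K₂ : Set (Fin n₂ → ℝ))
    (h₁ne : K₁.Nonempty) (h₁cl : IsClosed K₁) (h₁bd : Bornology.IsBounded K₁)
    (h₁cv : Convex ℝ K₁)
    (h₂ne : K₂.Nonempty) (h₂cl : IsClosed K₂) (h₂bd : Bornology.IsBounded K₂)
    (h₂cv : Convex ℝ K₂)
    (f₁ : (Fin n₁ → ℝ) → ℝ) (f₂ : (Fin n₂ → ℝ) → ℝ)
    (hf₁c : ContinuousOn f₁ K₁) (hf₂c : ContinuousOn f₂ K₂)
    (hf₁cv : ConvexOn ℝ K₁ f₁) (hf₂cv : ConvexOn ℝ K₂ f₂)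
    (hω₁ : diffBound 2 K₁ f₁ 1) (hω₂ : diffBound 2 K₂ f₂ 1) :
    (sInf {r : ℝ | ∃ (c : ℝ) (a : Fin n₁ → ℝ) (b : Fin n₂ → ℝ), ∀ z ∈ K₁ ×ˢ K₂,
        |f₁ z.1 - f₂ z.2 - (c + (∑ i, a i * z.1 i) + (∑ j, b j * z.2 j))| ≤ r} =
      sInf {r : ℝ | ∃ (c : ℝ) (a : Fin n₁ → ℝ), ∀ x ∈ K₁, |f₁ x - (c + ∑ i, a i * x i)| ≤ r} +
      sInf {r : ℝ | ∃ (c : ℝ) (a : Fin n₂ → ℝ), ∀ y ∈ K₂, |f₂ y - (c + ∑ j, a j * y j)| ≤ r}) ∧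
    diffBound 2 (K₁ ×ˢ K₂) (fun z => f₁ z.1 - f₂ z.2) 1 := by
  have hK₁ : IsCompact K₁ := Metric.isCompact_of_isClosed_isBounded h₁cl h₁bd
  have hK₂ : IsCompact K₂ := Metric.isCompact_of_isClosed_isBounded h₂cl h₂bd
  constructor
  · obtain ⟨x₀, hx₀⟩ := h₁ne
    obtain ⟨y₀, hy₀⟩ := h₂ne
    apply le_antisymm
    · have key : ∀ s ∈ {r : ℝ | ∃ (c : ℝ) (a : Fin n₁ → ℝ), ∀ x ∈ K₁,
            |f₁ x - (c + ∑ i, a i * x i)| ≤ r},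
          ∀ t ∈ {r : ℝ | ∃ (c : ℝ) (a : Fin n₂ → ℝ), ∀ y ∈ K₂,
            |f₂ y - (c + ∑ j, a j * y j)| ≤ r},
          sInf {r : ℝ | ∃ (c : ℝ) (a : Fin n₁ → ℝ) (b : Fin n₂ → ℝ), ∀ z ∈ K₁ ×ˢ K₂,
            |f₁ z.1 - f₂ z.2 - (c + (∑ i, a i * z.1 i) + (∑ j, b j * z.2 j))| ≤ r} ≤ s + t := by
        rintro s ⟨c, a, hs⟩ t ⟨d, b, ht⟩
        apply csInf_le
        · refine ⟨0, ?_⟩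
          rintro r ⟨c, a, b, hr⟩
          exact (abs_nonneg _).trans (hr (x₀, y₀) ⟨hx₀, hy₀⟩)
        · refine ⟨c - d, a, -b, ?_⟩
          rintro ⟨x, y⟩ ⟨hx, hy⟩
          have h1 := abs_le.1 (hs x hx)
          have h2 := abs_le.1 (ht y hy)
          simp only [Pi.neg_apply, neg_mul, Finset.sum_neg_distrib]
          rw [abs_le]
          constructor <;> linarith [h1.1, h1.2, h2.1, h2.2]
      obtain ⟨_, _, _, _, m₁⟩ := exists_osc ⟨x₀, hx₀⟩ hK₁ hf₁c 0
      obtain ⟨_, _, _, _, m₂⟩ := exists_osc ⟨y₀, hy₀⟩ hK₂ hf₂c 0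
      rw [← sub_le_iff_le_add]
      apply le_csInf ⟨_, m₁⟩
      intro s hs
      rw [sub_le_iff_le_add, ← sub_le_iff_le_add']
      apply le_csInf ⟨_, m₂⟩
      intro t ht
      rw [sub_le_iff_le_add']
      exact key s hs t ht
    · apply le_csInf
      · obtain ⟨_, _, _, _, m₁⟩ := exists_osc ⟨x₀, hx₀⟩ hK₁ hf₁c 0
        obtain ⟨_, _, _, _, m₂⟩ := exists_osc ⟨y₀, hy₀⟩ hK₂ hf₂c 0
        generalize ((f₁ _ - _) - (_ - _)) / 2 = s at m₁
        generalize ((f₂ _ - _) - (_ - _)) / 2 = t at m₂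
        obtain ⟨c, a, hs⟩ := m₁
        obtain ⟨d, b, ht⟩ := m₂
        refine ⟨s + t, c - d, a, -b, ?_⟩
        rintro ⟨x, y⟩ ⟨hx, hy⟩
        have h1 := abs_le.1 (hs x hx)
        have h2 := abs_le.1 (ht y hy)
        simp only [Pi.neg_apply, neg_mul, Finset.sum_neg_distrib]
        rw [abs_le]
        constructor <;> linarith [h1.1, h1.2, h2.1, h2.2]
      · rintro r ⟨c, a, b, hr⟩
        obtain ⟨p, hp, q, hq, m₁⟩ := exists_osc ⟨x₀, hx₀⟩ hK₁ hf₁c a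
        obtain ⟨p', hp', q', hq', m₂⟩ := exists_osc ⟨y₀, hy₀⟩ hK₂ hf₂c (-b)
        have i₁ := csInf_le (⟨0, by
          rintro r ⟨c, a, hr⟩
          exact (abs_nonneg _).trans (hr x₀ hx₀)⟩ : BddBelow {r : ℝ | ∃ (c : ℝ) (a : Fin n₁ → ℝ),
            ∀ x ∈ K₁, |f₁ x - (c + ∑ i, a i * x i)| ≤ r}) m₁
        have i₂ := csInf_le (⟨0, by
          rintro r ⟨c, a, hr⟩
          exact (abs_nonneg _).trans (hr y₀ hy₀)⟩ : BddBelow {r : ℝ | ∃ (c : ℝ) (a : Fin n₂ → ℝ),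
            ∀ x ∈ K₂, |f₂ x - (c + ∑ i, a i * x i)| ≤ r}) m₂
        have u := (abs_le.1 (hr (q, p') ⟨hq, hp'⟩)).2
        have l := (abs_le.1 (hr (p, q') ⟨hp, hq'⟩)).1
        simp only [Pi.neg_apply, neg_mul, Finset.sum_neg_distrib] at i₂
        linarith
  · rintro ⟨x, y⟩ ⟨h, k⟩ hz
    have A := diff_nonneg hf₁cv hω₁ x h (fun j hj => (hz j hj).1)
    have B := diff_nonneg hf₂cv hω₂ y k (fun j hj => (hz j hj).2)
    simp [Finset.sum_range_succ]
    rw [abs_le]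
    constructor <;> linarith [A.1, A.2, B.1, B.2]
end

section
/- For n ≥ 1 let Sⁿ := {u ∈ ℝ^{n+1} : u_i ≥ 0, ∑_{i=1}^{n+1} u_i = 1} and define f_n : Sⁿ → ℝ by f_n(u) = (1/2) ∑_{k=1}^{n+1} u_k log₂ u_k (with the convention 0·log₂ 0 = 0). Then f_n is continuous and convex, ω₂(f_n;Sⁿ) ≤ 1, and for every affine function φ on ℝ^{n+1} one has sup_{u∈Sⁿ} |f_n(u) − φ(u)| ≥ (1/4) log₂(n+1). In particular E₂(f_n;Sⁿ) ≥ (1/4) log₂(n+1). (Lower bound in Theorem 3.7: w₂(Sⁿ) ≥ (1/4) log₂(n+1).) -/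
open Finset

lemma aux_cont : Continuous (fun t : ℝ => t * Real.logb 2 t) := by
  have h := Real.continuous_mul_log.div_const (Real.log 2)
  refine h.congr fun t => ?_
  simp only [Real.logb, mul_div_assoc]

lemma aux_conv : ConvexOn ℝ (Set.Ici 0) (fun t : ℝ => t * Real.logb 2 t) := by
  have h := Real.convexOn_mul_log.smul (c := (Real.log 2)⁻¹)
    (inv_nonneg.2 (Real.log_nonneg (by norm_num)))
  refine h.congr fun t _ => ?_
  simp only [Real.logb, smul_eq_mul]
  ring

lemma aux_up (a b : ℝ) (ha : 0 ≤ a) (hb : 0 ≤ b) :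
    a * Real.logb 2 a ≤ a * Real.logb 2 (a + b) := by
  rcases ha.eq_or_lt with rfl | ha
  · simp
  · exact mul_le_mul_of_nonneg_left
      (Real.logb_le_logb_of_le (by norm_num) ha (by linarith)) ha.le

lemma aux_diff (a b m : ℝ) (ha : 0 ≤ a) (hb : 0 ≤ b) (hm : a + b = 2 * m) :
    0 ≤ a * Real.logb 2 a - 2 * (m * Real.logb 2 m) + b * Real.logb 2 b ∧
    a * Real.logb 2 a - 2 * (m * Real.logb 2 m) + b * Real.logb 2 b ≤ a + b := by
  constructor
  · have h := aux_conv.2 (Set.mem_Ici.2 ha) (Set.mem_Ici.2 hb)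
      (by norm_num : (0 : ℝ) ≤ 1/2) (by norm_num : (0 : ℝ) ≤ 1/2) (by norm_num)
    have e : (1/2 : ℝ) • a + (1/2 : ℝ) • b = m := by
      simp only [smul_eq_mul]; linarith
    rw [e] at h
    simp only [smul_eq_mul] at h
    linarith
  · have h1 := aux_up a b ha hb
    have h2 := aux_up b a hb ha
    rw [add_comm b a] at h2
    rcases (by linarith : 0 ≤ m).eq_or_lt with h0 | h0
    · subst h0
      have : a = 0 := by linarith
      have : b = 0 := by linarith
      simp [*]
    · have h3 : Real.logb 2 (a + b) = 1 + Real.logb 2 m := by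
        rw [hm, Real.logb_mul (by norm_num) h0.ne', Real.logb_self_eq_one (by norm_num)]
      have h4 : (a + b) * Real.logb 2 (a + b) = (a + b) + 2 * (m * Real.logb 2 m) := by
        rw [h3, hm]; ring
      linarith

/-- Lower bound in Theorem 3.7: the entropy function `f_n(u) = (1/2)∑ u_k log₂ u_k` on the
standard simplex is continuous, convex, has `ω₂ ≤ 1`, and is at distance at least
`(1/4) log₂(n+1)` from every affine function. -/
theorem simplex_entropy_lower_bound (n : ℕ) (hn : 1 ≤ n) :
    ContinuousOn (fun u : Fin (n + 1) → ℝ => (1 / 2) * ∑ k, u k * Real.logb 2 (u k))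
      (stdSimplex ℝ (Fin (n + 1))) ∧
    ConvexOn ℝ (stdSimplex ℝ (Fin (n + 1)))
      (fun u : Fin (n + 1) → ℝ => (1 / 2) * ∑ k, u k * Real.logb 2 (u k)) ∧
    diffBound 2 (stdSimplex ℝ (Fin (n + 1)))
      (fun u : Fin (n + 1) → ℝ => (1 / 2) * ∑ k, u k * Real.logb 2 (u k)) 1 ∧
    ∀ (c : ℝ) (a : Fin (n + 1) → ℝ), ∃ u ∈ stdSimplex ℝ (Fin (n + 1)),
      (1 / 4) * Real.logb 2 (n + 1) ≤
        |(1 / 2) * (∑ k, u k * Real.logb 2 (u k)) - (c + ∑ i, a i * u i)| := by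
  refine ⟨?_, ?_, ?_, ?_⟩
  · apply Continuous.continuousOn
    refine continuous_const.mul (continuous_finsetSum _ fun k _ => ?_)
    exact aux_cont.comp (continuous_apply k)
  · refine ⟨convex_stdSimplex ℝ _, ?_⟩
    intro x hx y hy s t hs ht hst
    have h : ∑ k, (s • x + t • y) k * Real.logb 2 ((s • x + t • y) k) ≤
        ∑ k, (s * (x k * Real.logb 2 (x k)) + t * (y k * Real.logb 2 (y k))) := by
      refine Finset.sum_le_sum fun k _ => ?_
      exact aux_conv.2 (hx.1 k) (hy.1 k) hs ht hst
    rw [Finset.sum_add_distrib, ← Finset.mul_sum, ← Finset.mul_sum] at h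
    simp only [smul_eq_mul]
    linarith
  · intro x h hK
    have h0 := hK 0 (by norm_num)
    have h1 := hK 1 (by norm_num)
    have h2 := hK 2 (by norm_num)
    simp only [Finset.sum_range_succ, Finset.sum_range_zero]
    generalize hp : x + ((0 : ℕ) : ℝ) • h = p at *
    generalize hq : x + ((1 : ℕ) : ℝ) • h = q at *
    generalize hr : x + ((2 : ℕ) : ℝ) • h = r at *
    have hm : ∀ k, p k + r k = 2 * q k := by
      intro k
      simp [← hp, ← hq, ← hr]
      ring
    have key := fun k => aux_diff (p k) (r k) (q k) (h0.1 k) (h2.1 k) (hm k)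
    have l := Finset.sum_nonneg (s := univ) fun k _ => (key k).1
    have u := Finset.sum_le_sum (s := univ) fun k _ => (key k).2
    have e0 := h0.2
    have e2 := h2.2
    simp only [Finset.sum_add_distrib, Finset.sum_sub_distrib, ← Finset.mul_sum] at l u
    rw [e0, e2] at u
    norm_num
    rw [abs_le]
    constructor <;> linarith
  · intro c a
    by_contra! H
    have hN : (0 : ℝ) < n + 1 := by positivity
    have hv : ∀ i, c + a i < (1 / 4) * Real.logb 2 (n + 1) ∧
        -((1 / 4) * Real.logb 2 (n + 1)) < c + a i := by
      intro i
      have := H (Pi.single i 1) (single_mem_stdSimplex ℝ i)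
      have z : ∑ k, (Pi.single i (1 : ℝ) : Fin (n + 1) → ℝ) k *
          Real.logb 2 ((Pi.single i (1 : ℝ) : Fin (n + 1) → ℝ) k) = 0 := by
        refine Finset.sum_eq_zero fun k _ => ?_
        by_cases hk : k = i
        · subst hk; simp
        · simp [hk]
      have z2 : ∑ k, a k * (Pi.single i (1 : ℝ) : Fin (n + 1) → ℝ) k = a i := by
        simp [Pi.single_apply]
      rw [z, z2, abs_lt] at this
      constructor <;> linarith [this.1, this.2]
    have hc := H (fun _ => ((n : ℝ) + 1)⁻¹) ⟨fun _ => by positivity, by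
      simp
      field_simp⟩
    simp only [Finset.sum_const, Finset.card_univ, Fintype.card_fin, nsmul_eq_mul,
      Real.logb_inv] at hc
    have e : ((n + 1 : ℕ) : ℝ) * (((n : ℝ) + 1)⁻¹ * -Real.logb 2 (n + 1))
        = -Real.logb 2 (n + 1) := by
      push_cast; field_simp
    rw [e, ← Finset.sum_mul, abs_lt] at hc
    have s := Finset.sum_le_sum (s := univ) fun i _ => (hv i).2.le
    simp only [Finset.sum_add_distrib, Finset.sum_const, Finset.card_univ, Fintype.card_fin,
      nsmul_eq_mul] at s
    push_cast at s
    have s2 := mul_le_mul_of_nonneg_right s (inv_nonneg.2 hN.le)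
    have e2 : ((n : ℝ) + 1) * -((1 / 4) * Real.logb 2 (n + 1)) * ((n : ℝ) + 1)⁻¹
      = -((1 / 4) * Real.logb 2 (n + 1)) := by field_simp
    have e3 : (((n : ℝ) + 1) * c + ∑ i, a i) * ((n : ℝ) + 1)⁻¹
      = c + (∑ i, a i) * ((n : ℝ) + 1)⁻¹ := by field_simp
    rw [e2, e3] at s2
    linarith [hc.1]
end

section
/- For every ε ∈ (0,1/2) there is a constant C = C(ε) such that for every n ≥ 1 and every continuous function f : Sⁿ → ℝ with ω₂(f;Sⁿ) ≤ 1 − ε there exists an affine function φ on ℝ^{n+1} with sup_{u∈Sⁿ} |f(u) − φ(u)| ≤ C + (1/4) log₂(n+1). (Upper bound in Theorem 3.7; together with the matching lower bound it yields lim_{n→∞} w₂(Sⁿ)/log₂ n = 1/4.) -/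
open Finset

def WHyp (n : ℕ) (f : (Fin (n + 1) → ℝ) → ℝ) (δ K : ℝ) : Prop :=
  0 ≤ δ ∧ δ ≤ 1 / 2 ∧ 0 ≤ K ∧ (∀ x ∈ stdSimplex ℝ (Fin (n + 1)), |f x| ≤ K) ∧
    (∀ x ∈ stdSimplex ℝ (Fin (n + 1)), ∀ y ∈ stdSimplex ℝ (Fin (n + 1)),
      |f ((1 / 2 : ℝ) • (x + y)) - (f x + f y) / 2| ≤ δ)

noncomputable def FF {n : ℕ} (f : (Fin (n + 1) → ℝ) → ℝ) (w : Fin (n + 1) → ℝ) : ℝ :=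
  (∑ i, w i) * f ((∑ i, w i)⁻¹ • w)

lemma seg_aux {n : ℕ} {f : (Fin (n + 1) → ℝ) → ℝ} {δ K : ℝ} (h : WHyp n f δ K) (k : ℕ) :
    ∀ x ∈ stdSimplex ℝ (Fin (n + 1)), ∀ y ∈ stdSimplex ℝ (Fin (n + 1)), ∀ t : ℝ, 0 ≤ t → t ≤ 1 →
      |f ((1 - t) • x + t • y) - ((1 - t) * f x + t * f y)| ≤ 2 * δ + 2 * K * (1 / 2) ^ k := by
  obtain ⟨hd, hd2, hK0, hK, hm⟩ := h
  have hconv := convex_stdSimplex ℝ (Fin (n + 1))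
  induction k with
  | zero =>
    intro x hx y hy t ht ht1
    have hz := hconv hx hy (sub_nonneg.2 ht1) ht (by ring)
    have h1 := abs_le.1 (hK _ hz)
    have h2 := abs_le.1 (hK _ hx)
    have h3 := abs_le.1 (hK _ hy)
    rw [abs_le]
    constructor <;> nlinarith
  | succ k ih =>
    have key : ∀ x ∈ stdSimplex ℝ (Fin (n + 1)), ∀ y ∈ stdSimplex ℝ (Fin (n + 1)), ∀ t : ℝ,
        0 ≤ t → t ≤ 1 / 2 →
        |f ((1 - t) • x + t • y) - ((1 - t) * f x + t * f y)| ≤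
          2 * δ + 2 * K * (1 / 2) ^ (k + 1) := by
      intro x hx y hy t ht ht1
      have hz := hconv hx hy (a := 1 - 2 * t) (b := 2 * t) (by linarith) (by linarith) (by ring)
      have h1 := abs_le.1 (ih x hx y hy (2 * t) (by linarith) (by linarith))
      have h2 := hm x hx _ hz
      have e : (1 / 2 : ℝ) • (x + ((1 - 2 * t) • x + (2 * t) • y)) = (1 - t) • x + t • y := by
        ext i; simp; ring
      rw [e] at h2
      have h2 := abs_le.1 h2
      rw [pow_succ, abs_le]
      constructor <;> linarith
    intro x hx y hy t ht ht1
    rcases le_total t (1 / 2) with h | h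
    · exact key x hx y hy t ht h
    · have := key y hy x hx (1 - t) (by linarith) (by linarith)
      rw [show (1 - (1 - t)) • y + (1 - t) • x = (1 - t) • x + t • y by
          ext i; simp; ring,
        show (1 - (1 - t)) * f y + (1 - t) * f x = (1 - t) * f x + t * f y by ring] at this
      exact this

lemma seg {n : ℕ} {f : (Fin (n + 1) → ℝ) → ℝ} {δ K : ℝ} (h : WHyp n f δ K)
    {x y : Fin (n + 1) → ℝ} (hx : x ∈ stdSimplex ℝ (Fin (n + 1)))
    (hy : y ∈ stdSimplex ℝ (Fin (n + 1))) {t : ℝ} (ht : 0 ≤ t) (ht1 : t ≤ 1) :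
    |f ((1 - t) • x + t • y) - ((1 - t) * f x + t * f y)| ≤ 1 := by
  have h2 : 2 * δ + 2 * K * 0 ≤ 1 := by linarith [h.2.1]
  refine le_trans ?_ h2
  refine ge_of_tendsto' (x := Filter.atTop) ?_ (fun k => seg_aux h k x hx y hy t ht ht1)
  exact ((tendsto_pow_atTop_nhds_zero_of_lt_one (by norm_num) (by norm_num)).const_mul _).const_add _

lemma norm_mem {n : ℕ} {w : Fin (n + 1) → ℝ} (hw : ∀ i, 0 ≤ w i) (hs : 0 < ∑ i, w i) :
    (∑ i, w i)⁻¹ • w ∈ stdSimplex ℝ (Fin (n + 1)) := by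
  refine ⟨fun i => by simpa using mul_nonneg (inv_nonneg.2 hs.le) (hw i), ?_⟩
  simp only [Pi.smul_apply, smul_eq_mul, ← mul_sum]
  exact inv_mul_cancel₀ hs.ne'

lemma eq_zero_of_sum {n : ℕ} {w : Fin (n + 1) → ℝ} (hw : ∀ i, 0 ≤ w i) (hs : ∑ i, w i = 0) :
    w = 0 := by
  ext i
  exact (sum_eq_zero_iff_of_nonneg (fun i _ => hw i)).1 hs i (mem_univ i)

lemma FF_zero {n : ℕ} (f : (Fin (n + 1) → ℝ) → ℝ) : FF f 0 = 0 := by simp [FF]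

lemma FF_mem {n : ℕ} (f : (Fin (n + 1) → ℝ) → ℝ) {x : Fin (n + 1) → ℝ}
    (hx : x ∈ stdSimplex ℝ (Fin (n + 1))) : FF f x = f x := by simp [FF, hx.2]

lemma FF_bound {n : ℕ} {f : (Fin (n + 1) → ℝ) → ℝ} {δ K : ℝ} (h : WHyp n f δ K)
    {w : Fin (n + 1) → ℝ} (hw : ∀ i, 0 ≤ w i) : |FF f w| ≤ K * ∑ i, w i := by
  have h0 : 0 ≤ ∑ i, w i := sum_nonneg fun i _ => hw i
  rcases h0.eq_or_lt with h1 | h1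
  · simp [FF, ← h1]
  · rw [FF, abs_mul, abs_of_pos h1, mul_comm]
    exact mul_le_mul_of_nonneg_right (h.2.2.2.1 _ (norm_mem hw h1)) h0

lemma FF_add {n : ℕ} {f : (Fin (n + 1) → ℝ) → ℝ} {δ K : ℝ} (h : WHyp n f δ K)
    {u v : Fin (n + 1) → ℝ} (hu : ∀ i, 0 ≤ u i) (hv : ∀ i, 0 ≤ v i) :
    |FF f (u + v) - (FF f u + FF f v)| ≤ ∑ i, (u + v) i := by
  have hu0 : 0 ≤ ∑ i, u i := sum_nonneg fun i _ => hu i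
  have hv0 : 0 ≤ ∑ i, v i := sum_nonneg fun i _ => hv i
  have hs : ∑ i, (u + v) i = ∑ i, u i + ∑ i, v i := by simp [sum_add_distrib]
  rcases hu0.eq_or_lt with h1 | h1
  · rw [eq_zero_of_sum hu h1.symm]; simp [FF_zero, hv0]
  rcases hv0.eq_or_lt with h2 | h2
  · rw [eq_zero_of_sum hv h2.symm]; simp [FF_zero, hu0]
  have := seg h (norm_mem hu h1) (norm_mem hv h2) (t := (∑ i, v i) / (∑ i, u i + ∑ i, v i))
    (by positivity) (by rw [div_le_one (by positivity)]; linarith)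
  unfold FF
  rw [hs]
  set a := ∑ i, u i
  set b := ∑ i, v i
  have hab : 0 < a + b := by positivity
  have e : (1 - b / (a + b)) • a⁻¹ • u + (b / (a + b)) • b⁻¹ • v = (a + b)⁻¹ • (u + v) := by
    ext i; simp; field_simp; ring
  rw [e] at this
  have e2 : (a + b) * f ((a + b)⁻¹ • (u + v)) - (a * f (a⁻¹ • u) + b * f (b⁻¹ • v)) =
    (a + b) * (f ((a + b)⁻¹ • (u + v)) -
      ((1 - b / (a + b)) * f (a⁻¹ • u) + b / (a + b) * f (b⁻¹ • v))) := by
    field_simp; ring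
  rw [e2, abs_mul, abs_of_pos hab]
  exact mul_le_of_le_one_right hab.le this

lemma FF_sum {n : ℕ} {f : (Fin (n + 1) → ℝ) → ℝ} {δ K : ℝ} (h : WHyp n f δ K)
    (w : ℕ → Fin (n + 1) → ℝ) (hw : ∀ k i, 0 ≤ w k i) (m : ℕ)
    (hs : ∑ i, (∑ k ∈ range m, w k) i ≤ 1) :
    |FF f (∑ k ∈ range m, w k) - ∑ k ∈ range m, FF f (w k)| ≤ m := by
  induction m with
  | zero => simp [FF_zero]
  | succ m ih =>
    have hn : ∀ i, 0 ≤ (∑ k ∈ range m, w k) i := fun i => by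
      rw [Finset.sum_apply]; exact sum_nonneg fun k _ => hw k i
    rw [sum_range_succ] at hs ⊢
    have h1 : ∑ i, (∑ k ∈ range m, w k) i ≤ 1 := by
      refine le_trans (sum_le_sum fun i _ => ?_) hs
      simpa using hw m i
    have h2 := abs_le.1 (ih h1)
    have h3 := abs_le.1 ((FF_add h hn (hw m)).trans hs)
    rw [sum_range_succ, abs_le]
    push_cast
    constructor <;> linarith

lemma cont_bound {n : ℕ} {f : (Fin (n + 1) → ℝ) → ℝ} {δ K : ℝ} (h : WHyp n f δ K)
    {x y : Fin (n + 1) → ℝ} (hx : x ∈ stdSimplex ℝ (Fin (n + 1)))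
    (hy : y ∈ stdSimplex ℝ (Fin (n + 1))) :
    |f x - f y| ≤ 2 + K * ∑ i, |x i - y i| := by
  set m := x ⊓ y with hm
  have hm0 : ∀ i, 0 ≤ m i := fun i => le_inf (hx.1 i) (hy.1 i)
  have hu : ∀ i, 0 ≤ (x - m) i := fun i => by simp [hm]
  have hv : ∀ i, 0 ≤ (y - m) i := fun i => by simp [hm]
  have h1 := FF_add h hm0 hu
  have h2 := FF_add h hm0 hv
  rw [add_sub_cancel, FF_mem f hx, hx.2] at h1
  rw [add_sub_cancel, FF_mem f hy, hy.2] at h2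
  have h3 := FF_bound h hu
  have h4 := FF_bound h hv
  have e : ∑ i, |x i - y i| = ∑ i, (x - m) i + ∑ i, (y - m) i := by
    rw [← sum_add_distrib]
    refine sum_congr rfl fun i _ => ?_
    simp only [hm, Pi.sub_apply, Pi.inf_apply]
    rcases le_total (x i) (y i) with h | h
    · rw [inf_eq_left.2 h, abs_of_nonpos (by linarith)]; ring
    · rw [inf_eq_right.2 h, abs_of_nonneg (by linarith)]; ring
  rw [e, mul_add]
  rw [abs_le] at *
  constructor <;> linarith [h1.1, h1.2]

/-- sampling lemma -/
lemma sampling {n : ℕ} {f : (Fin (n + 1) → ℝ) → ℝ} {δ K : ℝ} (h : WHyp n f δ K)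
    (s : Finset (Fin (n + 1))) (y : Fin (n + 1) → ℝ) (hy : ∀ i, i ∉ s → y i = 0) (p : ℕ) :
    ∀ (ι : Type) [Fintype ι] (μ : ι → ℝ) (x : ι → Fin (n + 1) → ℝ), (∀ j, 0 ≤ μ j) →
      ∑ j, μ j = 1 → (∀ j, x j ∈ stdSimplex ℝ (Fin (n + 1))) → (∀ i, ∑ j, μ j * x j i = y i) →
      |∑ j, μ j * f (x j) - f y| ≤
        δ * p + 2 + K * √(s.card * (∑ j, μ j * ∑ i, (x j i - y i) ^ 2) / 2 ^ p) := by
  induction p with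
  | zero =>
    intro ι _ μ x hμ hμ1 hx hxy
    have hyS : y ∈ stdSimplex ℝ (Fin (n + 1)) := by
      have := (convex_stdSimplex ℝ (Fin (n + 1))).sum_mem (t := univ) (fun j _ => hμ j) hμ1
        (fun j _ => hx j)
      convert this
      ext i; simp [hxy i]
    have e : ∑ j, μ j * f (x j) - f y = ∑ j, μ j * (f (x j) - f y) := by
      simp only [mul_sub, sum_sub_distrib, ← sum_mul, hμ1, one_mul]
    have h1 : |∑ j, μ j * f (x j) - f y| ≤ ∑ j, μ j * (2 + K * ∑ i, |x j i - y i|) := by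
      rw [e]
      refine (abs_sum_le_sum_abs _ _).trans (sum_le_sum fun j _ => ?_)
      rw [abs_mul, abs_of_nonneg (hμ j)]
      exact mul_le_mul_of_nonneg_left (cont_bound h (hx j) hyS) (hμ j)
    have e2 : ∑ j, μ j * (2 + K * ∑ i, |x j i - y i|) =
        2 + K * ∑ j, ∑ i, μ j * |x j i - y i| := by
      simp only [mul_add, sum_add_distrib, ← sum_mul, hμ1, one_mul, mul_sum]
      congr 1
      refine sum_congr rfl fun j _ => sum_congr rfl fun i _ => by ring
    have hz : ∀ j i, i ∉ s → μ j * |x j i - y i| = 0 := by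
      intro j i hi
      have h2 := hxy i
      rw [hy i hi] at h2 ⊢
      have := (sum_eq_zero_iff_of_nonneg (fun j _ => mul_nonneg (hμ j) ((hx j).1 i))).1 h2 j
        (mem_univ j)
      rw [sub_zero, abs_of_nonneg ((hx j).1 i), this]
    have e3 : ∑ j, ∑ i, μ j * |x j i - y i| = ∑ z ∈ univ ×ˢ s, μ z.1 * |x z.1 z.2 - y z.2| := by
      rw [sum_product]
      refine sum_congr rfl fun j _ => ?_
      symm
      exact sum_subset (subset_univ s) (fun i _ hi => hz j i hi)
    have h4 : ∑ z ∈ univ ×ˢ s, μ z.1 * |x z.1 z.2 - y z.2| ≤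
        √(s.card * (∑ j, μ j * ∑ i, (x j i - y i) ^ 2)) := by
      apply Real.le_sqrt_of_sq_le
      have cs := sum_mul_sq_le_sq_mul_sq ((univ : Finset ι) ×ˢ s) (fun z => √(μ z.1))
        (fun z => √(μ z.1) * |x z.1 z.2 - y z.2|)
      have a1 : ∀ z ∈ (univ : Finset ι) ×ˢ s, √(μ z.1) * (√(μ z.1) * |x z.1 z.2 - y z.2|) =
          μ z.1 * |x z.1 z.2 - y z.2| := fun z _ => by
        rw [← mul_assoc, Real.mul_self_sqrt (hμ _)]
      rw [sum_congr rfl a1] at cs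
      refine cs.trans ?_
      have a2 : ∑ z ∈ (univ : Finset ι) ×ˢ s, √(μ z.1) ^ 2 = s.card := by
        simp only [Real.sq_sqrt (hμ _)]
        rw [sum_product]
        simp [← mul_sum, hμ1]
      rw [a2]
      refine mul_le_mul_of_nonneg_left ?_ (by positivity)
      rw [sum_product]
      refine sum_le_sum fun j _ => ?_
      rw [mul_sum]
      refine le_trans (le_of_eq ?_) (sum_le_sum_of_subset_of_nonneg (subset_univ s)
        (fun i _ _ => mul_nonneg (hμ j) (sq_nonneg _)))
      refine sum_congr rfl fun i _ => ?_
      rw [mul_pow, Real.sq_sqrt (hμ _), sq_abs]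
    rw [e2, e3] at h1
    have := mul_le_mul_of_nonneg_left h4 h.2.2.1
    simp only [Nat.cast_zero, mul_zero, zero_add, pow_zero, div_one]
    linarith
  | succ p ih =>
    intro ι _ μ x hμ hμ1 hx hxy
    have hmid : ∀ z : ι × ι, (1 / 2 : ℝ) • (x z.1 + x z.2) ∈ stdSimplex ℝ (Fin (n + 1)) := by
      intro z
      rw [smul_add]
      exact convex_stdSimplex ℝ (Fin (n + 1)) (hx _) (hx _) (by norm_num) (by norm_num)
        (by norm_num)
    have fst : ∀ g : ι → ℝ, ∑ z : ι × ι, μ z.1 * μ z.2 * g z.1 = ∑ j, μ j * g j := by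
      intro g
      rw [Fintype.sum_prod_type]
      refine sum_congr rfl fun j _ => ?_
      simp only [mul_assoc, ← mul_sum]
      rw [← sum_mul, hμ1, one_mul]
    have snd : ∀ g : ι → ℝ, ∑ z : ι × ι, μ z.1 * μ z.2 * g z.2 = ∑ j, μ j * g j := by
      intro g
      rw [Fintype.sum_prod_type]
      simp only [mul_assoc, ← mul_sum]
      rw [← sum_mul, hμ1, one_mul]
    have tot : ∑ z : ι × ι, μ z.1 * μ z.2 = 1 := by
      have := fst (fun _ => 1)
      simpa [hμ1] using this
    have h1 := ih (ι × ι) (fun z => μ z.1 * μ z.2) (fun z => (1 / 2 : ℝ) • (x z.1 + x z.2))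
      (fun z => mul_nonneg (hμ _) (hμ _)) tot hmid (by
        intro i
        have : ∀ z : ι × ι, μ z.1 * μ z.2 * ((1 / 2 : ℝ) • (x z.1 + x z.2)) i =
          (1 / 2) * (μ z.1 * μ z.2 * x z.1 i) + (1 / 2) * (μ z.1 * μ z.2 * x z.2 i) := by
            intro z; simp; ring
        simp only [this]
        rw [sum_add_distrib, ← mul_sum, ← mul_sum, fst (fun j => x j i), snd (fun j => x j i), hxy]
        ring)
    have hV : ∑ z : ι × ι, μ z.1 * μ z.2 * ∑ i, (((1 / 2 : ℝ) • (x z.1 + x z.2)) i - y i) ^ 2 =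
        (∑ j, μ j * ∑ i, (x j i - y i) ^ 2) / 2 := by
      have cross : ∀ i, ∑ z : ι × ι, (μ z.1 * (x z.1 i - y i)) * (μ z.2 * (x z.2 i - y i)) = 0 := by
        intro i
        rw [Fintype.sum_prod_type]
        simp only [← mul_sum]
        have : ∑ j, μ j * (x j i - y i) = 0 := by
          simp only [mul_sub, sum_sub_distrib, ← sum_mul, hμ1, hxy]; ring
        rw [this]; simp
      have : ∀ z : ι × ι, μ z.1 * μ z.2 * ∑ i, (((1 / 2 : ℝ) • (x z.1 + x z.2)) i - y i) ^ 2 =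
          (1 / 4) * (μ z.1 * μ z.2 * ∑ i, (x z.1 i - y i) ^ 2) +
          (1 / 4) * (μ z.1 * μ z.2 * ∑ i, (x z.2 i - y i) ^ 2) +
          (1 / 2) * ∑ i, (μ z.1 * (x z.1 i - y i)) * (μ z.2 * (x z.2 i - y i)) := by
        intro z
        simp only [mul_sum, ← sum_add_distrib]
        refine sum_congr rfl fun i _ => ?_
        simp; ring
      simp only [this]
      rw [sum_add_distrib, sum_add_distrib, ← mul_sum, ← mul_sum, ← mul_sum,
        fst (fun j => ∑ i, (x j i - y i) ^ 2), snd (fun j => ∑ i, (x j i - y i) ^ 2), sum_comm]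
      simp only [cross]
      simp; ring
    rw [hV] at h1
    have h2 : |∑ z : ι × ι, μ z.1 * μ z.2 * f ((1 / 2 : ℝ) • (x z.1 + x z.2)) -
        ∑ j, μ j * f (x j)| ≤ δ := by
      have e : ∑ z : ι × ι, μ z.1 * μ z.2 * f ((1 / 2 : ℝ) • (x z.1 + x z.2)) -
        ∑ j, μ j * f (x j) = ∑ z : ι × ι, μ z.1 * μ z.2 *
          (f ((1 / 2 : ℝ) • (x z.1 + x z.2)) - (f (x z.1) + f (x z.2)) / 2) := by
        have : ∀ z : ι × ι, μ z.1 * μ z.2 *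
          (f ((1 / 2 : ℝ) • (x z.1 + x z.2)) - (f (x z.1) + f (x z.2)) / 2) =
          μ z.1 * μ z.2 * f ((1 / 2 : ℝ) • (x z.1 + x z.2)) -
          ((1 / 2) * (μ z.1 * μ z.2 * f (x z.1)) + (1 / 2) * (μ z.1 * μ z.2 * f (x z.2))) := by
            intro z; ring
        simp only [this]
        rw [sum_sub_distrib, sum_add_distrib, ← mul_sum, ← mul_sum, fst (fun j => f (x j)),
          snd (fun j => f (x j))]
        ring
      rw [e]
      refine (abs_sum_le_sum_abs _ _).trans ?_
      calc _ ≤ ∑ z : ι × ι, μ z.1 * μ z.2 * δ := by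
            refine sum_le_sum fun z _ => ?_
            have hp := mul_nonneg (hμ z.1) (hμ z.2)
            rw [abs_mul, abs_of_nonneg hp]
            exact mul_le_mul_of_nonneg_left (h.2.2.2.2 _ (hx _) _ (hx _)) hp
        _ = δ := by rw [← sum_mul, tot, one_mul]
    have e4 : (s.card : ℝ) * (∑ j, μ j * ∑ i, (x j i - y i) ^ 2) / 2 ^ (p + 1) =
      s.card * ((∑ j, μ j * ∑ i, (x j i - y i) ^ 2) / 2) / 2 ^ p := by
        rw [pow_succ]; field_simp
    rw [e4]
    push_cast
    rw [abs_le] at *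
    constructor <;> linarith [h1.1, h1.2, h2.1, h2.2]

lemma cone_sampling {n : ℕ} {f : (Fin (n + 1) → ℝ) → ℝ} {δ K : ℝ} (h : WHyp n f δ K)
    (s : Finset (Fin (n + 1))) (ι : Type) [Fintype ι] (μ : ι → ℝ) (w : ι → Fin (n + 1) → ℝ)
    (hμ : ∀ j, 0 ≤ μ j) (hμ1 : ∑ j, μ j ≤ 1) (hw : ∀ j i, 0 ≤ w j i) (κ : ℝ) (hκ : 0 ≤ κ)
    (hwκ : ∀ j i, w j i ≤ κ) (B : Fin (n + 1) → ℝ) (hB : ∀ i, ∑ j, μ j * w j i = B i)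
    (hBs : ∀ i, i ∉ s → B i = 0) (hQ1 : ∑ i, B i ≤ 1) (p : ℕ) :
    |∑ j, μ j * FF f (w j) - FF f B| ≤
      (∑ i, B i) * (δ * p) + 2 + K * √(s.card * κ / 2 ^ p) := by
  have hK := h.2.2.1
  have hd := h.1
  have hB0 : ∀ i, 0 ≤ B i := fun i => by
    rw [← hB]; exact sum_nonneg fun j _ => mul_nonneg (hμ j) (hw j i)
  have hQ0 : 0 ≤ ∑ i, B i := sum_nonneg fun i _ => hB0 i
  have hq0 : ∀ j, 0 ≤ ∑ i, w j i := fun j => sum_nonneg fun i _ => hw j i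
  have hQq : ∑ j, μ j * ∑ i, w j i = ∑ i, B i := by
    simp only [mul_sum]; rw [sum_comm]; simp only [hB]
  rcases hQ0.eq_or_lt with h0 | hQ
  · have hB' := eq_zero_of_sum hB0 h0.symm
    have : ∀ j, μ j * FF f (w j) = 0 := by
      intro j
      rw [← h0] at hQq
      have h1 := (sum_eq_zero_iff_of_nonneg (fun j _ => mul_nonneg (hμ j) (hq0 j))).1 hQq j
        (mem_univ j)
      rw [FF, ← mul_assoc, h1, zero_mul]
    simp only [this, hB', FF_zero]
    simp
    positivity
  set Q := ∑ i, B i with hQdef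
  let x : ι → Fin (n + 1) → ℝ := fun j =>
    if ∑ i, w j i = 0 then Pi.single 0 1 else (∑ i, w j i)⁻¹ • w j
  have hx : ∀ j, x j ∈ stdSimplex ℝ (Fin (n + 1)) := by
    intro j
    by_cases hj : ∑ i, w j i = 0
    · simp only [x, hj, if_true]; exact single_mem_stdSimplex ℝ 0
    · simp only [x, hj, if_false]
      exact norm_mem (hw j) (lt_of_le_of_ne (hq0 j) (Ne.symm hj))
  have hμ'0 : ∀ j, 0 ≤ μ j * (∑ i, w j i) / Q := fun j =>
    div_nonneg (mul_nonneg (hμ j) (hq0 j)) hQ.le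
  have hμ'1 : ∑ j, μ j * (∑ i, w j i) / Q = 1 := by
    rw [← sum_div, hQq, div_self hQ.ne']
  have hxw : ∀ j i, (∑ i, w j i) * x j i = w j i := by
    intro j i
    by_cases hj : ∑ i, w j i = 0
    · rw [hj, eq_zero_of_sum (hw j) hj]; simp
    · simp only [x, hj, if_false, Pi.smul_apply, smul_eq_mul]
      rw [← mul_assoc, mul_inv_cancel₀ hj, one_mul]
  have hy : ∀ i, ∑ j, μ j * (∑ i, w j i) / Q * x j i = (Q⁻¹ • B) i := by
    intro i
    have : ∀ j, μ j * (∑ i, w j i) / Q * x j i = Q⁻¹ * (μ j * w j i) := by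
      intro j
      rw [← hxw j i]; field_simp
    simp only [this, ← mul_sum, hB]
    simp
  have hS := sampling h s (Q⁻¹ • B) (fun i hi => by simp [hBs i hi]) p ι _ x hμ'0 hμ'1 hx hy
  have hfw : ∀ j, FF f (w j) = (∑ i, w j i) * f (x j) := by
    intro j
    by_cases hj : ∑ i, w j i = 0
    · rw [FF, hj, zero_mul, zero_mul]
    · simp only [x, hj, if_false, FF]
  have hE : ∑ j, μ j * FF f (w j) - FF f B =
      Q * (∑ j, μ j * (∑ i, w j i) / Q * f (x j) - f (Q⁻¹ • B)) := by
    rw [mul_sub, mul_sum]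
    congr 1
    refine sum_congr rfl fun j _ => ?_
    rw [hfw]; field_simp
  rw [hE, abs_mul, abs_of_pos hQ]
  have hV : ∑ j, μ j * (∑ i, w j i) / Q * ∑ i, (x j i - (Q⁻¹ • B) i) ^ 2 ≤ κ / Q := by
    have v1 : ∑ j, μ j * (∑ i, w j i) / Q * ∑ i, (x j i - (Q⁻¹ • B) i) ^ 2 ≤
        ∑ j, μ j * (∑ i, w j i) / Q * ∑ i, (x j i) ^ 2 := by
      simp only [mul_sum]
      rw [sum_comm, sum_comm (s := (univ : Finset ι))]
      refine sum_le_sum fun i _ => ?_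
      simp only [← mul_sum]
      set y := (Q⁻¹ • B) i
      have : ∀ j, μ j * (∑ i, w j i) / Q * (x j i - y) ^ 2 =
        μ j * (∑ i, w j i) / Q * (x j i) ^ 2 - 2 * y * (μ j * (∑ i, w j i) / Q * x j i) +
         y ^ 2 * (μ j * (∑ i, w j i) / Q) := by intro j; ring
      simp only [this]
      rw [sum_add_distrib, sum_sub_distrib, ← mul_sum, ← mul_sum, hμ'1, hy]
      nlinarith [sq_nonneg y]
    refine v1.trans ?_
    calc _ ≤ ∑ j, μ j * (κ / Q) := by
          refine sum_le_sum fun j _ => ?_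
          have : μ j * (∑ i, w j i) / Q * ∑ i, (x j i) ^ 2 = μ j / Q * ∑ i, w j i * x j i := by
            have e1 : ∀ i, w j i * x j i = (∑ i, w j i) * (x j i) ^ 2 := fun i => by
              conv_lhs => rw [← hxw j i]
              ring
            rw [sum_congr rfl fun i _ => e1 i, ← mul_sum]
            ring
          rw [this, mul_div_assoc', div_mul_eq_mul_div]
          refine div_le_div_of_nonneg_right (mul_le_mul_of_nonneg_left ?_ (hμ j)) hQ.le
          calc _ ≤ ∑ i, κ * x j i := sum_le_sum fun i _ =>
                mul_le_mul_of_nonneg_right (hwκ j i) ((hx j).1 i)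
            _ = κ := by rw [← mul_sum, (hx j).2, mul_one]
      _ ≤ κ / Q := by
          rw [← sum_mul]
          exact mul_le_of_le_one_left (by positivity) hμ1
  have hsq : Q * √(s.card * (∑ j, μ j * (∑ i, w j i) / Q * ∑ i, (x j i - (Q⁻¹ • B) i) ^ 2) / 2 ^ p)
      ≤ √(s.card * κ / 2 ^ p) := by
    apply Real.le_sqrt_of_sq_le
    have hVn : 0 ≤ ∑ j, μ j * (∑ i, w j i) / Q * ∑ i, (x j i - (Q⁻¹ • B) i) ^ 2 :=
      sum_nonneg fun j _ => mul_nonneg (hμ'0 j) (sum_nonneg fun i _ => sq_nonneg _)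
    rw [mul_pow, Real.sq_sqrt (by positivity)]
    calc _ ≤ Q ^ 2 * (s.card * (κ / Q) / 2 ^ p) := by gcongr
      _ = Q * (s.card * κ / 2 ^ p) := by field_simp
      _ ≤ _ := mul_le_of_le_one_left (by positivity) hQ1
  calc _ ≤ Q * _ := mul_le_mul_of_nonneg_left hS hQ.le
    _ = Q * (δ * p) + 2 * Q + K * (Q * √(s.card * (∑ j, μ j * (∑ i, w j i) / Q *
        ∑ i, (x j i - (Q⁻¹ • B) i) ^ 2) / 2 ^ p)) := by ring
    _ ≤ _ := by
      have := mul_le_mul_of_nonneg_left hsq hK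
      linarith

lemma vertex_sampling {n : ℕ} {f : (Fin (n + 1) → ℝ) → ℝ} {δ K : ℝ} (h : WHyp n f δ K)
    (hv : ∀ i, f (Pi.single i 1) = 0)
    (s : Finset (Fin (n + 1))) (w : Fin (n + 1) → ℝ) (hw : ∀ i, 0 ≤ w i) (hw1 : ∑ i, w i ≤ 1)
    (hs : ∀ i, i ∉ s → w i = 0) (p : ℕ) :
    |FF f w| ≤ (∑ i, w i) * (δ * p) + 2 + K * √(s.card / 2 ^ p) := by
  have := cone_sampling h s (Fin (n + 1)) w (fun j => Pi.single j 1) hw hw1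
    (fun j => (single_mem_stdSimplex ℝ j).1) 1 zero_le_one (fun j i => by
      rw [Pi.single_apply]; split_ifs <;> norm_num) w
    (fun i => by simp [Pi.single_apply]) hs hw1 p
  have e : ∀ j : Fin (n + 1), FF f (Pi.single j 1) = 0 := fun j => by
    rw [FF_mem f (single_mem_stdSimplex ℝ j), hv]
  simp only [e, mul_zero, sum_const_zero, zero_sub, abs_neg, mul_one] at this
  exact this

lemma exists_pow (a : ℝ) (ha : 0 ≤ a) : ∃ p : ℕ, (p : ℝ) ≤ a + 1 ∧ (2 : ℝ) ^ a ≤ 2 ^ p := by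
  refine ⟨⌈a⌉₊, (Nat.ceil_lt_add_one ha).le, ?_⟩
  rw [← Real.rpow_natCast]
  exact Real.rpow_le_rpow_of_exponent_le (by norm_num) (Nat.le_ceil a)

lemma K_bound {n : ℕ} {f : (Fin (n + 1) → ℝ) → ℝ} {δ : ℝ} (hd : 0 ≤ δ) (hd2 : δ ≤ 1 / 2)
    (hf : ContinuousOn f (stdSimplex ℝ (Fin (n + 1))))
    (hm : ∀ x ∈ stdSimplex ℝ (Fin (n + 1)), ∀ y ∈ stdSimplex ℝ (Fin (n + 1)),
      |f ((1 / 2 : ℝ) • (x + y)) - (f x + f y) / 2| ≤ δ)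
    (hv : ∀ i, f (Pi.single i 1) = 0) :
    WHyp n f δ (Real.logb 2 (n + 1) + 7) := by
  have hL : 0 ≤ Real.logb 2 (n + 1) := Real.logb_nonneg (by norm_num) (by
    have : (0 : ℝ) ≤ n := by positivity
    linarith)
  obtain ⟨x0, hx0, hmax⟩ := (isCompact_stdSimplex ℝ (Fin (n + 1))).exists_isMaxOn
    ⟨_, single_mem_stdSimplex ℝ 0⟩ hf.abs
  have hK : ∀ x ∈ stdSimplex ℝ (Fin (n + 1)), |f x| ≤ |f x0| := fun x hx => hmax hx
  have h : WHyp n f δ |f x0| := ⟨hd, hd2, abs_nonneg _, hK, hm⟩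
  obtain ⟨p, hp, hp2⟩ := exists_pow (Real.logb 2 (n + 1) + 2) (by linarith)
  have h1 := vertex_sampling h hv univ x0 hx0.1 hx0.2.le (by simp) p
  rw [FF_mem f hx0, hx0.2] at h1
  have h2 : √((univ : Finset (Fin (n + 1))).card / 2 ^ p) ≤ 1 / 2 := by
    rw [Real.sqrt_le_left (by norm_num), div_le_iff₀ (by positivity)]
    rw [Real.rpow_add (by norm_num), Real.rpow_logb (by norm_num) (by norm_num) (by positivity)] at hp2
    simp
    norm_num at hp2
    linarith
  have h3 := mul_le_mul_of_nonneg_left h2 (abs_nonneg (f x0))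
  have h4 : |f x0| ≤ Real.logb 2 (n + 1) + 7 := by
    have : δ * p ≤ 1 / 2 * p := mul_le_mul_of_nonneg_right hd2 (by positivity)
    linarith
  exact ⟨hd, hd2, by linarith, fun x hx => (hK x hx).trans h4, hm⟩

lemma exists_lev (l : ℝ) (T : ℕ) (v : ℝ) : ∃ k, k ≤ T ∧ (v ≤ 1 → v ≤ (2 : ℝ) ^ (-(k * l)) ∧
    (k < T → (2 : ℝ) ^ (-((k + 1) * l)) < v)) := by
  classical
  refine ⟨Nat.findGreatest (fun k => v ≤ (2 : ℝ) ^ (-(k * l))) T, Nat.findGreatest_le T, ?_⟩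
  intro hv
  constructor
  · exact Nat.findGreatest_spec (P := fun k : ℕ => v ≤ (2 : ℝ) ^ (-(k * l))) (Nat.zero_le T)
      (by simpa using hv)
  · intro hk
    have := Nat.findGreatest_is_greatest (P := fun k : ℕ => v ≤ (2 : ℝ) ^ (-(k * l)))
      (Nat.lt_succ_self _) hk
    push_cast at this
    exact not_le.1 this

lemma two_bounds {n : ℕ} {f : (Fin (n + 1) → ℝ) → ℝ} {δ K : ℝ} (h : WHyp n f δ K)
    (hv : ∀ i, f (Pi.single i 1) = 0) (l : ℝ) (hl : 0 ≤ l) (T : ℕ)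
    (hT : (2 : ℝ) ^ (T * l) = n + 1) (C1 : ℝ) (hC1 : K * (2 : ℝ) ^ (-l) ≤ C1)
    (ι : Type) [Fintype ι] (μ : ι → ℝ) (x : ι → Fin (n + 1) → ℝ) (hμ : ∀ j, 0 ≤ μ j)
    (hμ1 : ∑ j, μ j = 1) (hx : ∀ j, x j ∈ stdSimplex ℝ (Fin (n + 1)))
    (b : Fin (n + 1) → ℝ) (hb : ∀ i, ∑ j, μ j * x j i = b i) :
    ∃ A : ℝ, |∑ j, μ j * f (x j)| ≤ δ * l * (A + 3) + (T + 1) * (C1 + 5) ∧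
      |∑ j, μ j * f (x j) - f b| ≤ δ * l * (T - A + 2) + (T + 1) * (C1 + 5) := by
  classical
  have hd := h.1
  have hd2 := h.2.1
  have hK := h.2.2.1
  choose lev hlevT hlev using exists_lev l T
  let w : ℕ → ι → Fin (n + 1) → ℝ := fun k j i => if lev (x j i) = k then x j i else 0
  have hx1 : ∀ j i, x j i ≤ 1 := fun j i => by
    rw [← (hx j).2]; exact single_le_sum (fun i _ => (hx j).1 i) (mem_univ i)
  have hw0 : ∀ k j i, 0 ≤ w k j i := fun k j i => by
    simp only [w]; split_ifs; exacts [(hx j).1 i, le_rfl]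
  have hwx : ∀ k j i, w k j i ≤ x j i := fun k j i => by
    simp only [w]; split_ifs; exacts [le_rfl, (hx j).1 i]
  have hwsum : ∀ j, ∑ k ∈ range (T + 1), w k j = x j := fun j => by
    ext i
    rw [Finset.sum_apply]
    simp only [w]
    rw [sum_ite_eq]
    simp [Nat.lt_succ_of_le (hlevT _)]
  let B : ℕ → Fin (n + 1) → ℝ := fun k i => ∑ j, μ j * w k j i
  have hB0 : ∀ k i, 0 ≤ B k i := fun k i => sum_nonneg fun j _ => mul_nonneg (hμ j) (hw0 k j i)
  have hBsum : ∑ k ∈ range (T + 1), B k = b := by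
    ext i
    rw [Finset.sum_apply]
    simp only [B]
    rw [sum_comm, ← hb]
    refine sum_congr rfl fun j _ => ?_
    rw [← mul_sum]
    conv_rhs => rw [← hwsum j]
    rw [Finset.sum_apply]
  have hbS : b ∈ stdSimplex ℝ (Fin (n + 1)) := by
    have := (convex_stdSimplex ℝ (Fin (n + 1))).sum_mem (t := univ) (fun j _ => hμ j) hμ1
      (fun j _ => hx j)
    convert this
    ext i; simp [hb i]
  let Q : ℕ → ℝ := fun k => ∑ i, B k i
  have hQ0 : ∀ k, 0 ≤ Q k := fun k => sum_nonneg fun i _ => hB0 k i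
  have hQsum : ∑ k ∈ range (T + 1), Q k = 1 := by
    simp only [Q]
    rw [sum_comm, ← hbS.2]
    refine sum_congr rfl fun i _ => ?_
    rw [← hBsum, Finset.sum_apply]
  have hQ1 : ∀ k, Q k ≤ 1 := fun k => by
    rw [← hbS.2]
    refine sum_le_sum fun i _ => ?_
    rw [← hb]
    exact sum_le_sum fun j _ => mul_le_mul_of_nonneg_left (hwx k j i) (hμ j)
  have hq1 : ∀ k j, ∑ i, w k j i ≤ 1 := fun k j => by
    rw [← (hx j).2]; exact sum_le_sum fun i _ => hwx k j i
  have hQq : ∀ k, ∑ j, μ j * ∑ i, w k j i = Q k := fun k => by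
    simp only [mul_sum, Q, B]; rw [sum_comm]
  have sq2 : ∀ a : ℝ, √((2 : ℝ) ^ (-(2 * a))) = 2 ^ (-a) := by
    intro a
    rw [show -(2 * a) = -a * (2 : ℕ) by push_cast; ring, Real.rpow_mul_natCast (by norm_num)]
    exact Real.sqrt_sq (by positivity)
  -- splitting the points
  let E : ℕ → ℝ := fun k => ∑ j, μ j * FF f (w k j)
  have hsplit : |∑ j, μ j * f (x j) - ∑ k ∈ range (T + 1), E k| ≤ T + 1 := by
    have e : ∑ j, μ j * f (x j) - ∑ k ∈ range (T + 1), E k =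
        ∑ j, μ j * (FF f (∑ k ∈ range (T + 1), w k j) - ∑ k ∈ range (T + 1), FF f (w k j)) := by
      simp only [mul_sub, sum_sub_distrib, E]
      congr 1
      · refine sum_congr rfl fun j _ => ?_
        rw [hwsum, FF_mem f (hx j)]
      · rw [sum_comm]; simp only [mul_sum]
    rw [e]
    refine (abs_sum_le_sum_abs _ _).trans ?_
    calc _ ≤ ∑ j, μ j * ((T : ℝ) + 1) := by
          refine sum_le_sum fun j _ => ?_
          rw [abs_mul, abs_of_nonneg (hμ j)]
          have := FF_sum h (fun k => w k j) (fun k i => hw0 k j i) (T + 1)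
            (by rw [hwsum, (hx j).2])
          push_cast at this
          exact mul_le_mul_of_nonneg_left this (hμ j)
      _ = T + 1 := by rw [← sum_mul, hμ1, one_mul]
  have hsplitb : |f b - ∑ k ∈ range (T + 1), FF f (B k)| ≤ T + 1 := by
    have := FF_sum h B hB0 (T + 1) (by rw [hBsum, hbS.2])
    rw [hBsum, FF_mem f hbS] at this
    push_cast at this
    exact this
  -- first bound
  have b1 : ∀ k ∈ range (T + 1), |E k| ≤ δ * l * (Q k * (k + 3)) + (C1 + 3) := by
    intro k hk
    have hkT : k ≤ T := Nat.lt_succ_iff.1 (mem_range.1 hk)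
    obtain ⟨p, hp, hp2⟩ := exists_pow ((k + 3) * l) (by positivity)
    have hj : ∀ j, |FF f (w k j)| ≤ (∑ i, w k j i) * (δ * p) + 2 + C1 := by
      intro j
      set s := univ.filter (fun i => w k j i ≠ 0) with hs
      have h1 := vertex_sampling h hv s (w k j) (hw0 k j) (hq1 k j) (by
        intro i hi; simpa [hs] using hi) p
      have hcard : (s.card : ℝ) ≤ (2 : ℝ) ^ ((k + 1) * l) := by
        rcases hkT.eq_or_lt with h2 | h2
        · calc (s.card : ℝ) ≤ n + 1 := by
                have := card_le_univ s
                rw [Fintype.card_fin] at this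
                exact_mod_cast this
            _ = (2 : ℝ) ^ (T * l) := hT.symm
            _ ≤ _ := by
              apply Real.rpow_le_rpow_of_exponent_le (by norm_num)
              rw [h2]; nlinarith
        · have h3 : ∀ i ∈ s, (2 : ℝ) ^ (-((k + 1) * l)) ≤ w k j i := by
            intro i hi
            have hi : w k j i ≠ 0 := by simpa [hs] using hi
            simp only [w] at hi ⊢
            split_ifs at hi ⊢ with h4
            · have := (hlev (x j i) (hx1 j i)).2
              rw [h4] at this
              exact (this h2).le
            · simp at hi
          have h5 := card_nsmul_le_sum s (w k j) _ h3
          have h6 : ∑ i ∈ s, w k j i ≤ 1 :=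
            (sum_le_sum_of_subset_of_nonneg (subset_univ s) fun i _ _ => hw0 k j i).trans (hq1 k j)
          rw [nsmul_eq_mul, Real.rpow_neg (by norm_num)] at h5
          have h7 : (0 : ℝ) < 2 ^ (((k : ℝ) + 1) * l) := by positivity
          have := h5.trans h6
          rwa [← div_eq_mul_inv, div_le_one h7] at this
      have h8 : √(s.card / 2 ^ p) ≤ (2 : ℝ) ^ (-l) := by
        rw [← sq2 l]
        apply Real.sqrt_le_sqrt
        calc (s.card : ℝ) / 2 ^ p ≤ (2 : ℝ) ^ (((k : ℝ) + 1) * l) / 2 ^ (((k : ℝ) + 3) * l) := by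
              gcongr
          _ = _ := by rw [← Real.rpow_sub (by norm_num)]; congr 1; ring
      have := mul_le_mul_of_nonneg_left h8 hK
      linarith
    calc |E k| ≤ ∑ j, μ j * ((∑ i, w k j i) * (δ * p) + 2 + C1) := by
          refine (abs_sum_le_sum_abs _ _).trans (sum_le_sum fun j _ => ?_)
          rw [abs_mul, abs_of_nonneg (hμ j)]
          exact mul_le_mul_of_nonneg_left (hj j) (hμ j)
      _ = Q k * (δ * p) + 2 + C1 := by
          simp only [mul_add, sum_add_distrib, ← mul_assoc, ← sum_mul, hμ1, one_mul, hQq]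
      _ ≤ Q k * (δ * ((k + 3) * l + 1)) + 2 + C1 := by
          have := mul_le_mul_of_nonneg_left (mul_le_mul_of_nonneg_left hp hd) (hQ0 k)
          linarith
      _ ≤ _ := by
          have : Q k * δ ≤ 1 * 1 := mul_le_mul (hQ1 k) (by linarith) hd (by norm_num)
          linarith
  have b2 : ∀ k ∈ range (T + 1), |E k - FF f (B k)| ≤
      δ * l * (Q k * (T - k + 2)) + (C1 + 3) := by
    intro k hk
    have hkT : (k : ℝ) ≤ T := by exact_mod_cast Nat.lt_succ_iff.1 (mem_range.1 hk)
    obtain ⟨p, hp, hp2⟩ := exists_pow ((T - k + 2) * l) (mul_nonneg (by linarith) hl)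
    have h1 := cone_sampling h univ ι μ (w k) hμ hμ1.le (hw0 k) ((2 : ℝ) ^ (-(k * l)))
      (by positivity) (by
        intro j i
        simp only [w]
        split_ifs with h4
        · have := (hlev (x j i) (hx1 j i)).1
          rwa [h4] at this
        · positivity) (B k) (fun i => rfl) (by simp) (hQ1 k) p
    have h8 : √((univ : Finset (Fin (n + 1))).card * (2 : ℝ) ^ (-(k * l)) / 2 ^ p) ≤
        (2 : ℝ) ^ (-l) := by
      rw [← sq2 l]
      apply Real.sqrt_le_sqrt
      rw [card_univ, Fintype.card_fin]
      push_cast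
      rw [← hT]
      calc (2 : ℝ) ^ (T * l) * (2 : ℝ) ^ (-(k * l)) / 2 ^ p
          ≤ (2 : ℝ) ^ (T * l) * (2 : ℝ) ^ (-(k * l)) / 2 ^ (((T : ℝ) - k + 2) * l) := by
              gcongr
        _ = _ := by
          rw [← Real.rpow_add (by norm_num), ← Real.rpow_sub (by norm_num)]; congr 1; ring
    have h9 := mul_le_mul_of_nonneg_left h8 hK
    have h10 := mul_le_mul_of_nonneg_left (mul_le_mul_of_nonneg_left hp hd) (hQ0 k)
    have h11 : Q k * δ ≤ 1 * 1 := mul_le_mul (hQ1 k) (by linarith) hd (by norm_num)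
    refine h1.trans ?_
    change Q k * (δ * p) + 2 + _ ≤ _
    linarith
  have s1 : |∑ k ∈ range (T + 1), E k| ≤
      δ * l * ((∑ k ∈ range (T + 1), Q k * k) + 3) + (T + 1) * (C1 + 3) := by
    refine (abs_sum_le_sum_abs _ _).trans ((sum_le_sum b1).trans (le_of_eq ?_))
    rw [sum_add_distrib, ← mul_sum]
    simp only [mul_add, sum_add_distrib, ← sum_mul, hQsum]
    simp
  have s2 : |∑ k ∈ range (T + 1), E k - ∑ k ∈ range (T + 1), FF f (B k)| ≤
      δ * l * (T - (∑ k ∈ range (T + 1), Q k * k) + 2) + (T + 1) * (C1 + 3) := by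
    rw [← sum_sub_distrib]
    refine (abs_sum_le_sum_abs _ _).trans ((sum_le_sum b2).trans (le_of_eq ?_))
    rw [sum_add_distrib, ← mul_sum]
    simp only [mul_add, mul_sub, sum_add_distrib, sum_sub_distrib, ← sum_mul, hQsum]
    simp
  have hT0 : (0 : ℝ) ≤ T := by positivity
  refine ⟨∑ k ∈ range (T + 1), Q k * k, ?_, ?_⟩
  · rw [abs_le] at *
    constructor <;> linarith [s1.1, s1.2, hsplit.1, hsplit.2]
  · rw [abs_le] at *
    constructor <;> linarith [s2.1, s2.2, hsplit.1, hsplit.2, hsplitb.1, hsplitb.2]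
/-- pairs of finite measures with the same barycenter -/
def PairBound (n : ℕ) (f : (Fin (n + 1) → ℝ) → ℝ) (D : ℝ) : Prop :=
  ∀ (ι ι' : Type) [Fintype ι] [Fintype ι'] (μ : ι → ℝ) (ν : ι' → ℝ) (x : ι → Fin (n + 1) → ℝ)
    (y : ι' → Fin (n + 1) → ℝ), (∀ j, 0 ≤ μ j) → (∀ j, 0 ≤ ν j) → ∑ j, μ j = 1 → ∑ j, ν j = 1 →
    (∀ j, x j ∈ stdSimplex ℝ (Fin (n + 1))) → (∀ j, y j ∈ stdSimplex ℝ (Fin (n + 1))) →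
    (∀ i, ∑ j, μ j * x j i = ∑ j, ν j * y j i) →
    ∑ j, μ j * f (x j) - ∑ j, ν j * f (y j) < D

lemma sep_finite {n : ℕ} {f : (Fin (n + 1) → ℝ) → ℝ} {R : ℝ} (hR : 0 < R)
    (h : PairBound n f (2 * R)) (X : Set (Fin (n + 1) → ℝ)) (hX : X.Finite)
    (hXS : X ⊆ stdSimplex ℝ (Fin (n + 1))) :
    ∃ a : Fin (n + 1) → ℝ, ∀ x ∈ X, |f x - ∑ i, a i * x i| ≤ R := by
  rcases X.eq_empty_or_nonempty with rfl | ⟨x0, hx0⟩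
  · exact ⟨0, by simp⟩
  set A := convexHull ℝ ((fun x => (x, f x - R)) '' X) with hA
  set B := convexHull ℝ ((fun x => (x, f x + R)) '' X) with hB
  have hdisj : Disjoint A B := by
    rw [Set.disjoint_left]
    rintro ⟨z, t⟩ h1 h2
    rw [hA, mem_convexHull_iff_exists_fintype] at h1
    rw [hB, mem_convexHull_iff_exists_fintype] at h2
    obtain ⟨ι, _, μ, p, hμ, hμ1, hp, hz⟩ := h1
    obtain ⟨ι', _, ν, q, hν, hν1, hq, hz'⟩ := h2
    choose x hx hxp using hp
    choose y hy hyq using hq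
    simp only [← hxp] at hz
    simp only [← hyq] at hz'
    have e1 := congrArg Prod.fst hz
    have e2 := congrArg Prod.snd hz
    have e3 := congrArg Prod.fst hz'
    have e4 := congrArg Prod.snd hz'
    simp only [Prod.fst_sum, Prod.snd_sum, Prod.smul_fst, Prod.smul_snd, smul_eq_mul] at e1 e2 e3 e4
    have := h ι ι' μ ν x y hμ hν hμ1 hν1 (fun j => hXS (hx j)) (fun j => hXS (hy j)) (fun i => by
      have := congrFun (e1.trans e3.symm) i
      simpa [Finset.sum_apply] using this)
    simp only [mul_sub, mul_add, sum_sub_distrib, sum_add_distrib, ← sum_mul, hμ1, hν1] at e2 e4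
    linarith
  obtain ⟨g, u, v, hgA, huv, hgB⟩ := geometric_hahn_banach_compact_closed (convex_convexHull ℝ _)
    ((hX.image _).isCompact_convexHull ℝ) (convex_convexHull ℝ _)
    ((hX.image _).isClosed_convexHull ℝ) hdisj
  have hg : ∀ x : Fin (n + 1) → ℝ, ∀ t : ℝ,
      g (x, t) = ∑ i, x i * g (Pi.single i 1, 0) + t * g (0, 1) := by
    intro x t
    have : ((x, t) : (Fin (n + 1) → ℝ) × ℝ) =
        ∑ i, x i • ((Pi.single i 1 : Fin (n + 1) → ℝ), (0 : ℝ)) + t • ((0 : Fin (n + 1) → ℝ), (1 : ℝ)) := by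
      ext i
      · simp [Prod.fst_sum, Finset.sum_apply, Pi.single_apply]
      · simp [Prod.snd_sum]
    rw [this, map_add, map_sum]
    simp only [map_smul, smul_eq_mul]
  have h1 : ∀ x ∈ X, ∑ i, x i * g (Pi.single i 1, 0) + (f x - R) * g (0, 1) < u := fun x hx => by
    rw [← hg]; exact hgA _ (subset_convexHull ℝ _ ⟨x, hx, rfl⟩)
  have h2 : ∀ x ∈ X, v < ∑ i, x i * g (Pi.single i 1, 0) + (f x + R) * g (0, 1) := fun x hx => by
    rw [← hg]; exact hgB _ (subset_convexHull ℝ _ ⟨x, hx, rfl⟩)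
  have hγ : 0 < g (0, 1) := by
    have a1 := h1 x0 hx0
    have a2 := h2 x0 hx0
    by_contra hc
    nlinarith
  set γ := g (0, 1)
  refine ⟨fun i => (u - g (Pi.single i 1, 0)) / γ, fun x hx => ?_⟩
  have e : ∑ i, (u - g (Pi.single i 1, 0)) / γ * x i =
      (u - ∑ i, x i * g (Pi.single i 1, 0)) / γ := by
    rw [eq_div_iff hγ.ne', sum_mul]
    have : ∀ i, (u - g (Pi.single i 1, 0)) / γ * x i * γ = u * x i - x i * g (Pi.single i 1, 0) := by
      intro i; field_simp
    simp only [this, sum_sub_distrib, ← mul_sum, (hXS hx).2, mul_one]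
  rw [e]
  have a1 := h1 x hx
  have a2 := h2 x hx
  rw [abs_le]
  constructor
  · have : (u - ∑ i, x i * g (Pi.single i 1, 0)) / γ ≤ f x + R := by
      rw [div_le_iff₀ hγ]; linarith
    linarith
  · have : f x - R ≤ (u - ∑ i, x i * g (Pi.single i 1, 0)) / γ := by
      rw [le_div_iff₀ hγ]; linarith
    linarith

lemma sep {n : ℕ} {f : (Fin (n + 1) → ℝ) → ℝ} {R : ℝ} (hR : 0 < R)
    (hv : ∀ i, f (Pi.single i 1) = 0) (h : PairBound n f (2 * R)) :
    ∃ a : Fin (n + 1) → ℝ, ∀ x ∈ stdSimplex ℝ (Fin (n + 1)), |f x - ∑ i, a i * x i| ≤ R := by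
  have hcomp : IsCompact (Set.univ.pi fun _ : Fin (n + 1) => Set.Icc (-R) R) :=
    isCompact_univ_pi fun _ => isCompact_Icc
  have := hcomp.inter_iInter_nonempty
    (fun x : stdSimplex ℝ (Fin (n + 1)) =>
      {a : Fin (n + 1) → ℝ | |f x.1 - ∑ i, a i * x.1 i| ≤ R})
    (fun x => isClosed_le (by fun_prop) continuous_const) (by
      intro u
      obtain ⟨a, ha⟩ := sep_finite hR h
        ((Subtype.val '' (u : Set (stdSimplex ℝ (Fin (n + 1))))) ∪
          Set.range fun i : Fin (n + 1) => (Pi.single i 1 : Fin (n + 1) → ℝ))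
        ((u.finite_toSet.image _).union (Set.finite_range _)) (by
          rintro x (⟨y, _, rfl⟩ | ⟨i, rfl⟩)
          · exact y.2
          · exact single_mem_stdSimplex ℝ i)
      refine ⟨a, ?_, ?_⟩
      · intro i _
        have := ha (Pi.single i 1) (Or.inr ⟨i, rfl⟩)
        rw [hv] at this
        simp [Pi.single_apply] at this
        exact abs_le.1 this
      · simp only [Set.mem_iInter]
        intro x hx
        exact ha x.1 (Or.inl ⟨x, hx, rfl⟩))
  obtain ⟨a, _, ha⟩ := this
  rw [Set.mem_iInter] at ha
  exact ⟨a, fun x hx => ha ⟨x, hx⟩⟩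

lemma pair_bound {n : ℕ} {f : (Fin (n + 1) → ℝ) → ℝ} {ε : ℝ} (hε : 0 < ε) (hε2 : ε < 1 / 2)
    (h : WHyp n f ((1 - ε) / 2) (Real.logb 2 (n + 1) + 7))
    (hv : ∀ i, f (Pi.single i 1) = 0) (T : ℕ) (hT0 : 0 < T) (hT : 5 ≤ ε * T) :
    PairBound n f
      (2 * (1 / 4 * Real.logb 2 (n + 1) + ((T + 1) * (2 * T + 12) + 1))) := by
  intro ι ι' _ _ μ ν x y hμ hν hμ1 hν1 hx hy hxy
  set L := Real.logb 2 (n + 1) with hL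
  have hL0 : 0 ≤ L := Real.logb_nonneg (by norm_num) (by
    have : (0 : ℝ) ≤ n := by positivity
    linarith)
  have hT' : (0 : ℝ) < T := by exact_mod_cast hT0
  have hTl : (T : ℝ) * (L / T) = L := by field_simp
  have hpow : (2 : ℝ) ^ (T * (L / T)) = n + 1 := by
    rw [hTl, hL, Real.rpow_logb (by norm_num) (by norm_num) (by positivity)]
  set l := L / T with hl
  have hl0 : 0 ≤ l := by positivity
  have hC : (L + 7) * (2 : ℝ) ^ (-l) ≤ 2 * T + 7 := by
    rw [Real.rpow_neg (by norm_num), ← div_eq_mul_inv, div_le_iff₀ (by positivity)]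
    have h1 : 1 + l / 2 ≤ (2 : ℝ) ^ l := by
      rw [Real.rpow_def_of_pos (by norm_num)]
      have a1 := Real.add_one_le_exp (Real.log 2 * l)
      have a2 := Real.log_two_gt_d9
      nlinarith
    have h2 : (2 * (T : ℝ) + 7) * (1 + l / 2) ≤ (2 * T + 7) * (2 : ℝ) ^ l :=
      mul_le_mul_of_nonneg_left h1 (by positivity)
    nlinarith
  obtain ⟨A, a1, a2⟩ := two_bounds h hv l hl0 T hpow _ hC ι μ x hμ hμ1 hx _ (fun i => rfl)
  obtain ⟨A', b1, b2⟩ := two_bounds h hv l hl0 T hpow _ hC ι' ν y hν hν1 hy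
    (fun i => ∑ j, μ j * x j i) (fun i => (hxy i).symm)
  have h5 : 5 * l ≤ ε * L := by rw [← hTl]; nlinarith
  have hδ : (1 - ε) / 2 * l * (T + 5) ≤ L / 2 := by
    have : (1 - ε) / 2 * l * (T + 5) = (1 - ε) / 2 * (L + 5 * l) := by rw [← hTl]; ring
    rw [this]
    have : (1 - ε) / 2 * (L + 5 * l) ≤ (1 - ε) / 2 * (L + ε * L) :=
      mul_le_mul_of_nonneg_left (by linarith) (by linarith)
    nlinarith [mul_nonneg (sq_nonneg ε) hL0]
  rw [abs_le] at a1 a2 b1 b2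
  have c1 := a1.2
  have c2 := a2.2
  have c3 := b1.1
  have c4 := b2.1
  nlinarith

lemma main_zero {n : ℕ} {f : (Fin (n + 1) → ℝ) → ℝ} {ε : ℝ} (hε : 0 < ε) (hε2 : ε < 1 / 2)
    (hf : ContinuousOn f (stdSimplex ℝ (Fin (n + 1))))
    (hm : ∀ x ∈ stdSimplex ℝ (Fin (n + 1)), ∀ y ∈ stdSimplex ℝ (Fin (n + 1)),
      |f ((1 / 2 : ℝ) • (x + y)) - (f x + f y) / 2| ≤ (1 - ε) / 2)
    (hv : ∀ i, f (Pi.single i 1) = 0) (T : ℕ) (hT0 : 0 < T) (hT : 5 ≤ ε * T) :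
    ∃ a : Fin (n + 1) → ℝ, ∀ x ∈ stdSimplex ℝ (Fin (n + 1)), |f x - ∑ i, a i * x i| ≤
      1 / 4 * Real.logb 2 (n + 1) + ((T + 1) * (2 * T + 12) + 1) := by
  have hL0 : 0 ≤ Real.logb 2 (n + 1) := Real.logb_nonneg (by norm_num) (by
    have : (0 : ℝ) ≤ n := by positivity
    linarith)
  exact sep (by positivity) hv (pair_bound hε hε2
    (K_bound (by linarith) (by linarith) hf hm hv) hv T hT0 hT)

/-- Upper bound in Theorem 3.7: for every `ε ∈ (0,1/2)` there is `C = C(ε)` such that every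
continuous `f` on the simplex `Sⁿ` with `ω₂(f;Sⁿ) ≤ 1 − ε` is within `C + (1/4)log₂(n+1)`
of an affine function. -/
theorem simplex_whitney_upper_bound :
    ∀ ε : ℝ, 0 < ε → ε < 1 / 2 → ∃ C : ℝ,
      ∀ n : ℕ, 1 ≤ n → ∀ f : (Fin (n + 1) → ℝ) → ℝ,
        ContinuousOn f (stdSimplex ℝ (Fin (n + 1))) →
        diffBound 2 (stdSimplex ℝ (Fin (n + 1))) f (1 - ε) →
        ∃ (c : ℝ) (a : Fin (n + 1) → ℝ), ∀ u ∈ stdSimplex ℝ (Fin (n + 1)),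
          |f u - (c + ∑ i, a i * u i)| ≤ C + (1 / 4) * Real.logb 2 (n + 1) := by
  intro ε hε hε2
  obtain ⟨T, hT⟩ := exists_nat_gt (5 / ε)
  have hT' : (0 : ℝ) < T := lt_trans (by positivity) hT
  have hT0 : 0 < T := by exact_mod_cast hT'
  have hT5 : 5 ≤ ε * T := by
    rw [div_lt_iff₀ hε] at hT; linarith
  refine ⟨(T + 1) * (2 * T + 12) + 1, fun n _ f hf hdiff => ?_⟩
  have hm : ∀ x ∈ stdSimplex ℝ (Fin (n + 1)), ∀ y ∈ stdSimplex ℝ (Fin (n + 1)),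
      |f ((1 / 2 : ℝ) • (x + y)) - (f x + f y) / 2| ≤ (1 - ε) / 2 := by
    intro x hx y hy
    have hmid : (1 / 2 : ℝ) • (x + y) ∈ stdSimplex ℝ (Fin (n + 1)) := by
      rw [smul_add]
      exact convex_stdSimplex ℝ (Fin (n + 1)) hx hy (by norm_num) (by norm_num) (by norm_num)
    have e0 : x + ((0 : ℕ) : ℝ) • ((1 / 2 : ℝ) • (y - x)) = x := by simp
    have e1 : x + ((1 : ℕ) : ℝ) • ((1 / 2 : ℝ) • (y - x)) = (1 / 2 : ℝ) • (x + y) := by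
      ext i; simp; ring
    have e2 : x + ((2 : ℕ) : ℝ) • ((1 / 2 : ℝ) • (y - x)) = y := by
      ext i; simp
    have h1 := hdiff x ((1 / 2 : ℝ) • (y - x)) (by
      intro j hj
      interval_cases j
      · rwa [e0]
      · rwa [e1]
      · rwa [e2])
    rw [sum_range_succ, sum_range_succ, sum_range_one, e0, e1, e2] at h1
    norm_num at h1
    rw [abs_le] at h1 ⊢
    norm_num at h1 ⊢
    constructor <;> linarith [h1.1, h1.2]
  obtain ⟨a, ha⟩ := main_zero (f := fun u => f u - ∑ i, f (Pi.single i 1) * u i) hε hε2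
    (hf.sub (by fun_prop)) (by
      intro x hx y hy
      have e : ∑ i, f (Pi.single i 1) * ((1 / 2 : ℝ) • (x + y)) i =
          (∑ i, f (Pi.single i 1) * x i + ∑ i, f (Pi.single i 1) * y i) / 2 := by
        rw [← sum_add_distrib, sum_div]
        refine sum_congr rfl fun i _ => ?_
        simp; ring
      have := hm x hx y hy
      simp only [e]
      convert this using 2
      ring) (by intro i; simp [Pi.single_apply]) T hT0 hT5
  refine ⟨0, fun i => a i + f (Pi.single i 1), fun u hu => ?_⟩
  have h1 := ha u hu
  have e : f u - (0 + ∑ i, (a i + f (Pi.single i 1)) * u i) =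
      f u - ∑ i, f (Pi.single i 1) * u i - ∑ i, a i * u i := by
    simp only [add_mul, sum_add_distrib]; ring
  rw [e]
  linarith
end
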